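/- arXiv:2506.03625 — 2 statements merged into one kernel-verified Lean document; each statement's English description precedes it below -/
import Mathlib

section
/- For every integer a ≥ 3 there exists a constant C_a such that for every integer b ≥ C_a with gcd(a,b) = 1, the number π*(a,b) of primes not representable as au + bv with u, v nonnegative integers satisfies π*(a,b) > (1/2 + 1/(2(a−1))) · S(a,b)/log S(a,b), where S(a,b) = ab − a − b. -/
/-- `piStar a b` is the number of primes not representable as `a*u + b*v`
with `u, v` nonnegative integers, i.e. the number of primes not in the
numerical semigroup `⟨a, b⟩`. -/
noncomputable def piStar (a b : ℕ) : ℕ :=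
  Set.ncard {p : ℕ | p.Prime ∧ ¬ ∃ u v : ℕ, p = a * u + b * v}

/-- `S a b = a*b - a - b` (the Frobenius-type quantity). -/
def S (a b : ℕ) : ℕ := a * b - a - b

/-!
A prime `p < b * v` with `p ≡ b * v (mod a)`, where `1 ≤ v < a`, is not representable: in
`p = a * u + b * w` one has `w ≡ v (mod a)`, hence `w ≥ v`. The residue classes of `b * v` for `v`
coprime to `a` are distinct, so the prime number theorem in arithmetic progressions gives at least
`∑ v, b * v / (φ(a) * log (b * v))` such primes up to an error `o(b / log² b)`. Since `∑ v` over the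
reduced residues is `a * φ(a) / 2`, replacing each `log (b * v)` by `log ((a - 1) * b)` gives the
claimed bound; the term `v = 1` gains a multiple of `b / log² b` in this replacement, which absorbs
the error.

The prime number theorem in arithmetic progressions is needed with a remainder `O(x / log² x)`, so
nonvanishing of `L(s, χ)` on `re s = 1` has to be made quantitative. On `1 ≤ re s ≤ 2` the
`L`-functions and all their derivatives grow more slowly than every positive power of `|im s|`, and
by the `3-4-1` inequality so do their logarithmic derivatives. The Perron integral smoothed by the
weight `1 - n / x` then converges absolutely on `re s = 1 + 1 / log x`, and each integration by
parts saves a factor `log x`. Convexity in `x` of the smoothed sum removes the weight.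
-/

open Complex Filter Topology Asymptotics MeasureTheory

/-- The filter of points of the vertical strip `a ≤ re s ≤ b` whose imaginary part tends to `±∞`;
it expresses growth conditions that are uniform across the strip. -/
def stripEnd (a b : ℝ) : Filter ℂ :=
  comap (fun s => |s.im|) atTop ⊓ 𝓟 {s | s.re ∈ Set.Icc a b}

lemma eventually_stripEnd {a b : ℝ} {p : ℂ → Prop} :
    (∀ᶠ s in stripEnd a b, p s) ↔ ∃ T, ∀ s : ℂ, T ≤ |s.im| → s.re ∈ Set.Icc a b → p s := by
  simp only [stripEnd, eventually_inf_principal, eventually_comap, eventually_atTop]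
  exact ⟨fun ⟨T, h⟩ => ⟨T, fun s hs => h _ hs s rfl⟩,
    fun ⟨T, h⟩ => ⟨T, fun _ ht s hs => h s (hs ▸ ht)⟩⟩

lemma stripEnd_mono {a b a' b' : ℝ} (ha : a' ≤ a) (hb : b ≤ b') : stripEnd a b ≤ stripEnd a' b' :=
  inf_le_inf_left _ (principal_mono.2 fun _ hs => ⟨ha.trans hs.1, hs.2.trans hb⟩)

lemma tendsto_abs_im_stripEnd (a b : ℝ) : Tendsto (fun s : ℂ => |s.im|) (stripEnd a b) atTop :=
  tendsto_comap.mono_left inf_le_left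

lemma isBigO_abs_im_rpow_stripEnd {r r' : ℝ} (h : r ≤ r') (a b : ℝ) :
    (fun s : ℂ => |s.im| ^ r) =O[stripEnd a b] fun s => |s.im| ^ r' := by
  refine .of_bound' ?_
  filter_upwards [(tendsto_abs_im_stripEnd a b).eventually_ge_atTop 1] with s hs
  rw [Real.norm_of_nonneg (by positivity), Real.norm_of_nonneg (by positivity)]
  exact Real.rpow_le_rpow_of_exponent_le hs h

/-- `HasStripOrder n r f` says that `f` is analytic far out in the strip `1 ≤ re s ≤ 2` and that
`f` and its first `n` derivatives are `O(|im s| ^ (r + ε))` there for every `ε > 0`. -/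
def HasStripOrder (n : ℕ) (r : ℝ) (f : ℂ → ℂ) : Prop :=
  (∀ᶠ s in stripEnd 1 2, AnalyticAt ℂ f s) ∧
    ∀ k ≤ n, ∀ r' > r, iteratedDeriv k f =O[stripEnd 1 2] fun s => |s.im| ^ r'

namespace HasStripOrder

variable {n m : ℕ} {r r' : ℝ} {f g : ℂ → ℂ}

lemma of_le (hf : HasStripOrder n r f) (h : m ≤ n) : HasStripOrder m r f :=
  ⟨hf.1, fun k hk => hf.2 k (hk.trans h)⟩

lemma mono (hf : HasStripOrder n r f) (h : r ≤ r') : HasStripOrder n r' f :=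
  ⟨hf.1, fun k hk r'' h' => hf.2 k hk r'' (h.trans_lt h')⟩

lemma congr (hf : HasStripOrder n r f) (h : ∀ᶠ s in stripEnd 1 2, f =ᶠ[𝓝 s] g) :
    HasStripOrder n r g :=
  ⟨by filter_upwards [hf.1, h] with s hs hfg using hs.congr hfg, fun k hk r' hr =>
    (hf.2 k hk r' hr).congr' (h.mono fun _ hs => hs.iteratedDeriv_eq k) .rfl⟩

protected lemma deriv (hf : HasStripOrder (n + 1) r f) : HasStripOrder n r (deriv f) :=
  ⟨hf.1.mono fun _ hs => hs.deriv, fun k hk => by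
    rw [← iteratedDeriv_succ']
    exact hf.2 (k + 1) (Nat.succ_le_succ hk)⟩

lemma succ (hf : HasStripOrder 0 r f) (hf' : HasStripOrder n r (deriv f)) :
    HasStripOrder (n + 1) r f := by
  refine ⟨hf.1, fun k hk => ?_⟩
  cases k with
  | zero => exact hf.2 0 le_rfl
  | succ k =>
    rw [iteratedDeriv_succ']
    exact hf'.2 k (Nat.le_of_succ_le_succ hk)

lemma add (hf : HasStripOrder n r f) (hg : HasStripOrder n r g) :
    HasStripOrder n r (fun s => f s + g s) := by
  refine ⟨by filter_upwards [hf.1, hg.1] with s hs hs' using hs.fun_add hs', fun k hk r' hr =>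
    ((hf.2 k hk r' hr).add (hg.2 k hk r' hr)).congr' ?_ .rfl⟩
  filter_upwards [hf.1, hg.1] with s hs hs'
  exact (iteratedDeriv_fun_add hs.contDiffAt hs'.contDiffAt).symm

lemma const_mul (hf : HasStripOrder n r f) (c : ℂ) : HasStripOrder n r (fun s => c * f s) := by
  refine ⟨hf.1.mono fun s hs => analyticAt_const.fun_mul hs, fun k hk r' hr =>
    ((hf.2 k hk r' hr).const_mul_left c).congr' ?_ .rfl⟩
  filter_upwards [hf.1] with s hs
  exact (iteratedDeriv_const_mul c hs.contDiffAt).symm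

lemma sum {ι : Type*} {I : Finset ι} {f : ι → ℂ → ℂ} (h : ∀ i ∈ I, HasStripOrder n r (f i)) :
    HasStripOrder n r (fun s => ∑ i ∈ I, f i s) := by
  have hA : ∀ᶠ s in stripEnd 1 2, ∀ i ∈ I, AnalyticAt ℂ (f i) s :=
    I.eventually_all.2 fun i hi => (h i hi).1
  refine ⟨hA.mono fun s hs => I.analyticAt_fun_sum hs, fun k hk r' hr =>
    (IsBigO.sum fun i hi => (h i hi).2 k hk r' hr).congr' ?_ .rfl⟩
  filter_upwards [hA] with s hs
  rw [Finset.sum_apply, iteratedDeriv_fun_sum fun i hi => (hs i hi).contDiffAt]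

lemma mul (hf : HasStripOrder n r f) (hg : HasStripOrder n r' g) :
    HasStripOrder n (r + r') (fun s => f s * g s) := by
  refine ⟨by filter_upwards [hf.1, hg.1] with s hs hs' using hs.fun_mul hs', fun k hk ρ hρ => ?_⟩
  set ε := (ρ - (r + r')) / 2 with hε
  have leibniz : (fun s => ∑ i ∈ Finset.range (k + 1),
      (k.choose i : ℂ) * iteratedDeriv i f s * iteratedDeriv (k - i) g s)
      =O[stripEnd 1 2] fun s => |s.im| ^ ρ := by
    refine IsBigO.fun_sum fun i hi => ?_
    have hik : i ≤ k := Nat.lt_succ_iff.1 (Finset.mem_range.1 hi)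
    refine (((hf.2 i (hik.trans hk) (r + ε) (by linarith)).const_mul_left _).mul
      (hg.2 (k - i) ((k.sub_le i).trans hk) (r' + ε) (by linarith))).congr' .rfl ?_
    filter_upwards [(tendsto_abs_im_stripEnd 1 2).eventually_gt_atTop 0] with s hs
    rw [← Real.rpow_add hs]
    congr 1
    ring
  refine leibniz.congr' ?_ .rfl
  filter_upwards [hf.1, hg.1] with s hs hs'
  exact (iteratedDeriv_fun_mul hs.contDiffAt hs'.contDiffAt).symm

lemma inv (hf : HasStripOrder n r f) (h0 : ∀ᶠ s in stripEnd 1 2, f s ≠ 0)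
    (hinv : ∀ r' > -r, (fun s => (f s)⁻¹) =O[stripEnd 1 2] fun s => |s.im| ^ r') :
    HasStripOrder n (-r) (fun s => (f s)⁻¹) := by
  have hzero : HasStripOrder 0 (-r) (fun s => (f s)⁻¹) := by
    refine ⟨by filter_upwards [hf.1, h0] with s hs hs' using hs.fun_inv hs', fun k hk => ?_⟩
    simpa only [Nat.le_zero.1 hk, iteratedDeriv_zero] using hinv
  induction n with
  | zero => exact hzero
  | succ n ih =>
    have ih := ih (hf.of_le n.le_succ)
    refine hzero.succ ((((ih.mul ih).mul hf.deriv).const_mul (-1)).congr ?_ |>.mono (by linarith))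
    filter_upwards [hf.1, h0] with s hs hs0
    filter_upwards [hs.eventually_analyticAt, hs.continuousAt.eventually_ne hs0] with z hz hz0
    rw [deriv_fun_inv'' hz.differentiableAt hz0]
    field_simp

protected lemma logDeriv (hf : HasStripOrder (n + 1) r f) (h0 : ∀ᶠ s in stripEnd 1 2, f s ≠ 0)
    (hinv : ∀ r' > -r, (fun s => (f s)⁻¹) =O[stripEnd 1 2] fun s => |s.im| ^ r') :
    HasStripOrder n 0 (logDeriv f) :=
  ((hf.deriv.mul ((hf.of_le n.le_succ).inv h0 hinv)).congr
    (.of_forall fun _ => .of_forall fun _ => (div_eq_mul_inv _ _).symm)).mono (add_neg_cancel r).le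

end HasStripOrder

lemma rpow_le_two_rpow_abs_mul_rpow {x y : ℝ} (hx : 0 < x) (h₁ : x / 2 ≤ y) (h₂ : y ≤ 2 * x)
    (r : ℝ) : y ^ r ≤ 2 ^ |r| * x ^ r := by
  rcases le_total 0 r with hr | hr
  · rw [abs_of_nonneg hr, ← Real.mul_rpow zero_le_two hx.le]
    exact Real.rpow_le_rpow (by linarith) h₂ hr
  · rw [abs_of_nonpos hr, Real.rpow_neg zero_le_two, ← Real.inv_rpow zero_le_two,
      ← Real.mul_rpow (by norm_num) hx.le]
    exact Real.rpow_le_rpow_of_nonpos (by positivity) (by linarith) hr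

lemma abs_im_mem_Icc_of_mem_closedBall {s z : ℂ} {R : ℝ} (hz : z ∈ Metric.closedBall s R) :
    |z.im| ∈ Set.Icc (|s.im| - R) (|s.im| + R) := by
  have h := abs_le.1 ((abs_abs_sub_abs_le z.im s.im).trans
    ((abs_im_le_norm (z - s)).trans (mem_closedBall_iff_norm.1 hz)))
  constructor <;> linarith

lemma norm_iteratedDeriv_le_of_forall_mem_closedBall {f : ℂ → ℂ} {C R r : ℝ} {s : ℂ} (k : ℕ)
    (hR : 0 < R) (hRs : 2 * R ≤ |s.im|)
    (hf : ∀ z ∈ Metric.closedBall s R, AnalyticAt ℂ f z ∧ ‖f z‖ ≤ C * |z.im| ^ r) :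
    ‖iteratedDeriv k f s‖ ≤ k.factorial * (C * 2 ^ |r|) / R ^ k * |s.im| ^ r := by
  have him : 0 < |s.im| := by linarith
  have hC : 0 ≤ C := nonneg_of_mul_nonneg_left
    ((norm_nonneg _).trans (hf s (Metric.mem_closedBall_self hR.le)).2) (by positivity)
  have cauchy := norm_iteratedDeriv_le_of_forall_mem_sphere_norm_le
    (C := C * (2 ^ |r| * |s.im| ^ r)) k hR
    (DifferentiableOn.diffContOnCl fun z hz =>
      (hf z (Metric.closure_ball_subset_closedBall hz)).1.differentiableAt.differentiableWithinAt)
    fun z hz => by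
      have hz := Metric.sphere_subset_closedBall hz
      have him' := abs_im_mem_Icc_of_mem_closedBall hz
      refine (hf z hz).2.trans (mul_le_mul_of_nonneg_left ?_ hC)
      exact rpow_le_two_rpow_abs_mul_rpow (by linarith) (by linarith [him'.1])
        (by linarith [him'.2]) r
  exact cauchy.trans_eq (by ring)

lemma hasStripOrder_of_isBigO {r : ℝ} {f : ℂ → ℂ}
    (h : ∀ r' > r, ∃ δ > 0, (∀ᶠ s in stripEnd (1 - δ) (2 + δ), AnalyticAt ℂ f s) ∧
      f =O[stripEnd (1 - δ) (2 + δ)] fun s => |s.im| ^ r') (n : ℕ) :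
    HasStripOrder n r f := by
  refine ⟨?_, fun k _ r' hr => ?_⟩
  · obtain ⟨δ, hδ, hA, -⟩ := h (r + 1) (by linarith)
    exact hA.filter_mono (stripEnd_mono (by linarith) (by linarith))
  obtain ⟨δ, hδ, hA, hO⟩ := h r' hr
  obtain ⟨C, hC⟩ := hO.bound
  obtain ⟨T, hT⟩ := eventually_stripEnd.1 (hA.and hC)
  set R := min δ 1
  have hR : 0 < R := lt_min hδ one_pos
  refine .of_bound (k.factorial * (C * 2 ^ |r'|) / R ^ k)
    (eventually_stripEnd.2 ⟨max (T + 1) 2, fun s hs hre => ?_⟩)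
  have hRs : 2 * R ≤ |s.im| := by linarith [min_le_right δ 1, (le_max_right (T + 1) 2).trans hs]
  rw [Real.norm_of_nonneg (by positivity)]
  refine norm_iteratedDeriv_le_of_forall_mem_closedBall k hR hRs fun z hz => ?_
  have hzre : |(z - s).re| ≤ δ := (abs_re_le_norm (z - s)).trans
    ((mem_closedBall_iff_norm.1 hz).trans (min_le_left ..))
  rw [sub_re, abs_le] at hzre
  have hzim : T ≤ |z.im| := by
    linarith [(abs_im_mem_Icc_of_mem_closedBall hz).1, le_max_left (T + 1) 2, min_le_right δ 1]
  simpa only [Real.norm_of_nonneg (Real.rpow_nonneg (abs_nonneg z.im) r')] using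
    hT z hzim ⟨by linarith [hre.1], by linarith [hre.2]⟩

lemma hasStripOrder_inv_sub_const (n : ℕ) (c : ℂ) : HasStripOrder n (-1) fun s => (s - c)⁻¹ := by
  have him : ∀ a b, ∀ᶠ s in stripEnd a b, |s.im| / 2 ≤ ‖s - c‖ ∧ 0 < |s.im| := fun a b => by
    filter_upwards [(tendsto_abs_im_stripEnd a b).eventually_ge_atTop (2 * |c.im| + 1)] with s hs
    have h := abs_im_le_norm (s - c)
    rw [sub_im] at h
    have := abs_sub_abs_le_abs_sub s.im c.im
    have := abs_nonneg c.im
    constructor <;> linarith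
  refine hasStripOrder_of_isBigO (fun r' hr => ⟨1, one_pos, ?_, ?_⟩) n
  · filter_upwards [him _ _] with s hs
    have hsc : s - c ≠ 0 := norm_pos_iff.1 (by linarith [hs.1, hs.2])
    fun_prop (disch := assumption)
  · refine (IsBigO.of_bound 2 ?_).trans (isBigO_abs_im_rpow_stripEnd hr.le _ _)
    filter_upwards [him _ _] with s hs
    rw [norm_inv, Real.rpow_neg_one, norm_inv, Real.norm_of_nonneg hs.2.le, ← inv_inv (2 : ℝ),
      ← mul_inv]
    exact inv_anti₀ (by linarith [hs.2]) (by linarith [hs.1])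

lemma exists_norm_le_of_isBigO_stripEnd {a b r : ℝ} {f : ℂ → ℂ}
    (hf : ContinuousOn f {s | s.re ∈ Set.Icc a b})
    (h : f =O[stripEnd a b] fun s => |s.im| ^ r) :
    ∃ C, ∀ s : ℂ, s.re ∈ Set.Icc a b → ‖f s‖ ≤ C * (1 + s.im ^ 2) ^ (r / 2) := by
  have hpow (y : ℝ) : (1 + y ^ 2) ^ (r / 2) = √(1 + y ^ 2) ^ r := by
    rw [Real.sqrt_eq_rpow, ← Real.rpow_mul (by positivity)]
    ring_nf
  obtain ⟨C, hC⟩ := h.exists_nonneg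
  obtain ⟨T, hT⟩ := eventually_stripEnd.1 hC.2.bound
  have hK : IsCompact (Set.Icc a b ×ℂ Set.Icc (-max T 1) (max T 1)) :=
    isCompact_Icc.reProdIm isCompact_Icc
  obtain ⟨B, hB⟩ := hK.exists_bound_of_continuousOn
    (f := fun s => f s / ((1 + s.im ^ 2) ^ (r / 2) : ℝ))
    ((hf.mono fun s hs => hs.1).div (by
      refine (continuous_ofReal.comp (Continuous.rpow_const (by fun_prop) fun s => ?_)).continuousOn
      exact .inl (by positivity)) fun s _ => ofReal_ne_zero.2 (by positivity))
  refine ⟨max B (C * 2 ^ |r|), fun s hs => ?_⟩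
  have hpos : 0 < (1 + s.im ^ 2) ^ (r / 2) := by positivity
  rcases le_total |s.im| (max T 1) with him | him
  · have := hB s ⟨hs, abs_le.1 him⟩
    rw [norm_div, norm_real, Real.norm_of_nonneg hpos.le, div_le_iff₀ hpos] at this
    exact this.trans (mul_le_mul_of_nonneg_right (le_max_left ..) hpos.le)
  · have h1 : 1 ≤ |s.im| := (le_max_right ..).trans him
    have hbound := hT s ((le_max_left ..).trans him) hs
    rw [Real.norm_of_nonneg (by positivity)] at hbound
    have hle : |s.im| ≤ √(1 + s.im ^ 2) := Real.abs_le_sqrt (by linarith)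
    have hge : √(1 + s.im ^ 2) ≤ 2 * |s.im| := by
      rw [Real.sqrt_le_left (by positivity), mul_pow, sq_abs]
      nlinarith [sq_abs s.im]
    calc ‖f s‖ ≤ C * |s.im| ^ r := hbound
      _ ≤ C * (2 ^ |r| * √(1 + s.im ^ 2) ^ r) := mul_le_mul_of_nonneg_left
          (rpow_le_two_rpow_abs_mul_rpow (by positivity) (by linarith) (by linarith) r) hC.1
      _ ≤ max B (C * 2 ^ |r|) * (1 + s.im ^ 2) ^ (r / 2) := by
          rw [← hpow, ← mul_assoc]
          exact mul_le_mul_of_nonneg_right (le_max_right ..) hpos.le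

section ShiftedPower

variable {c : ℝ} {s : ℂ}

lemma sub_mul_cpow_eq {t : ℝ} (ht : t ≠ 0) (c s : ℂ) :
    ((t : ℂ) - c) * (t : ℂ) ^ (-(s + 1)) = (t : ℂ) ^ (-s) - c * (t : ℂ) ^ (-(s + 1)) := by
  rw [sub_mul, sub_left_inj, show -s = 1 + -(s + 1) by ring, cpow_add _ _ (ofReal_ne_zero.2 ht),
    cpow_one]

lemma integrableOn_cpow_neg_add_one (hc : 0 < c) (hs : 0 < s.re) :
    IntegrableOn (fun t : ℝ => (t : ℂ) ^ (-(s + 1))) (Set.Ioi c) :=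
  integrableOn_Ioi_cpow_of_lt (by simpa using hs) hc

lemma integrableOn_sub_mul_cpow (hc : 0 < c) (hs : 1 < s.re) :
    IntegrableOn (fun t : ℝ => ((t : ℂ) - c) * (t : ℂ) ^ (-(s + 1))) (Set.Ioi c) :=
  ((integrableOn_Ioi_cpow_of_lt (by simpa using hs) hc).sub
    ((integrableOn_cpow_neg_add_one hc (by linarith)).const_mul (c : ℂ))).congr_fun
    (fun _ ht => (sub_mul_cpow_eq (hc.trans ht).ne' c s).symm) measurableSet_Ioi

lemma integral_sub_mul_cpow (hc : 0 < c) (hs : 1 < s.re) :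
    s * ∫ t in Set.Ioi c, ((t : ℂ) - c) * (t : ℂ) ^ (-(s + 1)) = (c : ℂ) ^ (1 - s) / (s - 1) := by
  have hs0 : s ≠ 0 := fun h => by norm_num [h] at hs
  have hs1 : s - 1 ≠ 0 := fun h => by norm_num [sub_eq_zero.1 h] at hs
  have hs1' : 1 - s ≠ 0 := fun h => hs1 (by linear_combination -h)
  have hpow : (c : ℂ) ^ (1 - s) = c * (c : ℂ) ^ (-s) := by
    rw [sub_eq_add_neg, cpow_add _ _ (ofReal_ne_zero.2 hc.ne'), cpow_one]
  rw [setIntegral_congr_fun measurableSet_Ioi fun t ht => sub_mul_cpow_eq (hc.trans ht).ne' c s,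
    integral_sub (integrableOn_Ioi_cpow_of_lt (by simpa using hs) hc)
      ((integrableOn_cpow_neg_add_one hc (by linarith)).const_mul (c : ℂ)), integral_const_mul,
    integral_Ioi_cpow_of_lt (by simpa using hs) hc,
    integral_Ioi_cpow_of_lt (by simpa using zero_lt_one.trans hs) hc,
    show -(s + 1) + 1 = -s by ring, show -s + 1 = 1 - s by ring, hpow]
  field_simp
  ring

end ShiftedPower

/-- The error after time `N` in approximating the partial sums of `f` by `ρ` times their length. It
is set to `0` up to time `N`, so that integrals against it are Mellin transforms. -/
noncomputable def meanError (f : ℕ → ℂ) (ρ : ℂ) (N : ℕ) : ℝ → ℂ :=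
  (Set.Ioi (N : ℝ)).indicator fun t => ∑ k ∈ Finset.Ioc N ⌊t⌋₊, f k - ρ * (t - N)

section meanError

variable {f : ℕ → ℂ} {ρ : ℂ} {B : ℝ} {N : ℕ} {s : ℂ}

lemma measurable_meanError (f : ℕ → ℂ) (ρ : ℂ) (N : ℕ) : Measurable (meanError f ρ N) := by
  refine Measurable.indicator (Measurable.sub ?_ (by fun_prop)) measurableSet_Ioi
  exact (Measurable.of_discrete (f := fun n : ℕ => ∑ k ∈ Finset.Ioc N n, f k)).comp
    Nat.measurable_floor

lemma norm_meanError_le (hB : ∀ n : ℕ, ‖∑ k ∈ Finset.Icc 1 n, f k - ρ * n‖ ≤ B) (N : ℕ) (t : ℝ) :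
    ‖meanError f ρ N t‖ ≤ 2 * B + ‖ρ‖ := by
  have hB0 : 0 ≤ B := (norm_nonneg _).trans (hB 0)
  rw [meanError]
  by_cases ht : t ∈ Set.Ioi (N : ℝ)
  · have ht0 : 0 ≤ t := N.cast_nonneg.trans (le_of_lt ht)
    have hle : N ≤ ⌊t⌋₊ := Nat.le_floor (le_of_lt ht)
    have hsum : ∑ k ∈ Finset.Ioc N ⌊t⌋₊, f k
        = ∑ k ∈ Finset.Icc 1 ⌊t⌋₊, f k - ∑ k ∈ Finset.Icc 1 N, f k := by
      rw [eq_sub_iff_add_eq, add_comm]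
      exact Finset.sum_Ioc_consecutive f N.zero_le hle
    have hfloor : ‖ρ * ((⌊t⌋₊ : ℂ) - t)‖ ≤ ‖ρ‖ := by
      rw [norm_mul, ← ofReal_natCast, ← ofReal_sub, norm_real]
      refine mul_le_of_le_one_right (norm_nonneg _) (abs_le.2 ⟨?_, ?_⟩)
      · linarith [Nat.lt_floor_add_one t]
      · linarith [Nat.floor_le ht0]
    rw [Set.indicator_of_mem ht, hsum]
    calc _ = ‖(∑ k ∈ Finset.Icc 1 ⌊t⌋₊, f k - ρ * ⌊t⌋₊) - (∑ k ∈ Finset.Icc 1 N, f k - ρ * N)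
            + ρ * ((⌊t⌋₊ : ℂ) - t)‖ := by congr 1; ring
      _ ≤ B + B + ‖ρ‖ := norm_add_le_of_le (norm_sub_le_of_le (hB _) (hB _)) hfloor
      _ = 2 * B + ‖ρ‖ := by ring
  · rw [Set.indicator_of_notMem ht, norm_zero]
    positivity

lemma mellin_meanError_neg (f : ℕ → ℂ) (ρ : ℂ) (N : ℕ) (s : ℂ) :
    mellin (meanError f ρ N) (-s)
      = ∫ t in Set.Ioi (N : ℝ), (t : ℂ) ^ (-(s + 1)) * meanError f ρ N t := by
  rw [mellin, ← setIntegral_eq_of_subset_of_forall_sdiff_eq_zero measurableSet_Ioi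
    (Set.Ioi_subset_Ioi N.cast_nonneg) fun t ht => ?_]
  · refine setIntegral_congr_fun measurableSet_Ioi fun t _ => ?_
    rw [smul_eq_mul]
    ring_nf
  · rw [meanError, Set.indicator_of_notMem ht.2, mul_zero]

lemma norm_mellin_meanError_neg_le (hB : ∀ n : ℕ, ‖∑ k ∈ Finset.Icc 1 n, f k - ρ * n‖ ≤ B)
    (hN : 0 < N) (hs : 0 < s.re) :
    ‖mellin (meanError f ρ N) (-s)‖ ≤ (2 * B + ‖ρ‖) * ((N : ℝ) ^ (-s.re) / s.re) := by
  have hN0 : (0 : ℝ) < N := Nat.cast_pos.2 hN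
  have hint : ∫ t in Set.Ioi (N : ℝ), (2 * B + ‖ρ‖) * t ^ (-s.re - 1)
      = (2 * B + ‖ρ‖) * ((N : ℝ) ^ (-s.re) / s.re) := by
    rw [integral_const_mul, integral_Ioi_rpow_of_lt (by linarith) hN0, sub_add_cancel,
      neg_div_neg_eq]
  rw [mellin_meanError_neg, ← hint]
  refine norm_integral_le_of_norm_le
    ((integrableOn_Ioi_rpow_of_lt (by linarith) hN0).const_mul _)
    (ae_restrict_of_forall_mem measurableSet_Ioi fun t ht => ?_)
  rw [norm_mul, norm_cpow_eq_rpow_re_of_pos (hN0.trans ht), mul_comm, neg_re, add_re,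
    one_re, neg_add']
  exact mul_le_mul_of_nonneg_right (norm_meanError_le hB N t)
    (Real.rpow_nonneg (hN0.trans ht).le _)

lemma differentiableAt_mellin_meanError (hB : ∀ n : ℕ, ‖∑ k ∈ Finset.Icc 1 n, f k - ρ * n‖ ≤ B)
    (hN : 0 < N) (hs : s.re < 0) : DifferentiableAt ℂ (mellin (meanError f ρ N)) s := by
  have hbound := norm_meanError_le hB N
  refine mellin_differentiableAt_of_isBigO_rpow (a := 0) (b := s.re - 1) ?_ ?_ hs ?_ (by linarith)
  · have := (measurable_meanError f ρ N).aestronglyMeasurable (μ := volume)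
    exact ((locallyIntegrable_const (2 * B + ‖ρ‖)).mono this (.of_forall fun t =>
      (hbound t).trans (le_abs_self _))).locallyIntegrableOn _
  · exact .of_bound (2 * B + ‖ρ‖) (.of_forall fun t => by simpa using hbound t)
  · refine (isBigO_zero _ _).congr' ?_ .rfl
    filter_upwards [Ioo_mem_nhdsGT (Nat.cast_pos.2 hN : (0 : ℝ) < N)] with t ht
    exact (Set.indicator_of_notMem (not_lt.2 ht.2.le) _).symm

lemma integrableOn_cpow_mul_meanError (hB : ∀ n : ℕ, ‖∑ k ∈ Finset.Icc 1 n, f k - ρ * n‖ ≤ B)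
    (hN : 0 < N) (hs : 0 < s.re) :
    IntegrableOn (fun t : ℝ => (t : ℂ) ^ (-(s + 1)) * meanError f ρ N t) (Set.Ioi (N : ℝ)) :=
  Integrable.mul_bdd (integrableOn_cpow_neg_add_one (Nat.cast_pos.2 hN) hs)
    (measurable_meanError f ρ N).aestronglyMeasurable (.of_forall (norm_meanError_le hB N))

lemma sum_Ioc_eq_meanError_add (f : ℕ → ℂ) (ρ : ℂ) {t : ℝ} (ht : N < t) :
    ∑ k ∈ Finset.Ioc N ⌊t⌋₊, f k = meanError f ρ N t + ρ * (t - N) := by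
  rw [meanError, Set.indicator_of_mem (Set.mem_Ioi.2 ht), sub_add_cancel]

lemma integral_sum_Ioc_mul_cpow (hB : ∀ n : ℕ, ‖∑ k ∈ Finset.Icc 1 n, f k - ρ * n‖ ≤ B)
    (hN : 0 < N) (hs : 1 < s.re) :
    s * ∫ t in Set.Ioi (1 : ℝ), (∑ k ∈ Finset.Ioc N ⌊t⌋₊, f k) * (t : ℂ) ^ (-(s + 1))
      = ρ * (N : ℂ) ^ (1 - s) / (s - 1) + s * mellin (meanError f ρ N) (-s) := by
  have hN0 : (0 : ℝ) < N := Nat.cast_pos.2 hN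
  have split : ∀ t ∈ Set.Ioi (N : ℝ), (∑ k ∈ Finset.Ioc N ⌊t⌋₊, f k) * (t : ℂ) ^ (-(s + 1))
      = (t : ℂ) ^ (-(s + 1)) * meanError f ρ N t
        + ρ * ((t - (N : ℝ)) * (t : ℂ) ^ (-(s + 1))) := fun t ht => by
    rw [sum_Ioc_eq_meanError_add f ρ ht, ofReal_natCast]
    ring
  have hmain := integral_sub_mul_cpow hN0 hs
  rw [setIntegral_eq_of_subset_of_forall_sdiff_eq_zero measurableSet_Ioi
    (Set.Ioi_subset_Ioi (Nat.one_le_cast.2 hN)) fun t ht => ?_,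
    setIntegral_congr_fun measurableSet_Ioi split,
    integral_add (integrableOn_cpow_mul_meanError hB hN (by linarith))
      ((integrableOn_sub_mul_cpow hN0 hs).const_mul ρ),
    ← mellin_meanError_neg, integral_const_mul, mul_add, mul_left_comm s ρ, hmain, ofReal_natCast,
    mul_div_assoc, add_comm]
  rw [Finset.Ioc_eq_empty_of_le (Nat.floor_le_of_le (not_lt.1 ht.2)), Finset.sum_empty, zero_mul]

lemma LSeries_eq_sum_add_LSeries_indicator (hf : LSeriesSummable f s) (N : ℕ) :
    LSeries f s = ∑ k ∈ Finset.Icc 1 N, f k * (k : ℂ) ^ (-s)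
      + LSeries ((Finset.Icc 1 N : Set ℕ)ᶜ.indicator f) s := by
  have hterm : LSeries.term ((Finset.Icc 1 N : Set ℕ)ᶜ.indicator f) s
      = (Finset.Icc 1 N : Set ℕ)ᶜ.indicator (LSeries.term f s) := by
    ext k
    by_cases hk : k ∈ (Finset.Icc 1 N : Set ℕ)ᶜ
    · simp only [LSeries.term, Set.indicator_of_mem hk]
    · simp only [LSeries.term, Set.indicator_of_notMem hk, zero_div, ite_self]
  rw [LSeries, LSeries, hterm, ← tsum_subtype, ← hf.sum_add_tsum_compl (s := Finset.Icc 1 N)]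
  congr 1
  refine Finset.sum_congr rfl fun k hk => ?_
  rw [LSeries.term_of_ne_zero (Nat.one_le_iff_ne_zero.1 (Finset.mem_Icc.1 hk).1), cpow_neg,
    div_eq_mul_inv]

lemma sum_Icc_indicator_compl (f : ℕ → ℂ) (N n : ℕ) :
    ∑ k ∈ Finset.Icc 1 n, (Finset.Icc 1 N : Set ℕ)ᶜ.indicator f k = ∑ k ∈ Finset.Ioc N n, f k := by
  simp only [Set.indicator_apply, ← Finset.sum_filter]
  congr 1
  ext k
  simp only [Finset.mem_filter, Finset.mem_Icc, Set.mem_compl_iff, Finset.mem_coe, Finset.mem_Ioc]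
  omega

lemma norm_sum_Ioc_le (hB : ∀ n : ℕ, ‖∑ k ∈ Finset.Icc 1 n, f k - ρ * n‖ ≤ B) (N n : ℕ) :
    ‖∑ k ∈ Finset.Ioc N n, f k‖ ≤ (2 * B + 2 * ‖ρ‖) * n := by
  have hB0 : 0 ≤ B := (norm_nonneg _).trans (hB 0)
  rcases le_or_gt n N with h | h
  · rw [Finset.Ioc_eq_empty_of_le h, Finset.sum_empty, norm_zero]
    positivity
  · have hsum := sum_Ioc_eq_meanError_add f ρ (Nat.cast_lt (α := ℝ).2 h)
    have h1 : (1 : ℝ) ≤ n := Nat.one_le_cast.2 (Nat.one_le_of_lt h)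
    have hsub : ‖(((n : ℝ) : ℂ) - N)‖ ≤ n := by
      rw [← ofReal_natCast N, ← ofReal_sub, norm_real, Real.norm_of_nonneg (by simpa using h.le)]
      linarith [N.cast_nonneg (α := ℝ)]
    rw [Nat.floor_natCast] at hsum
    calc ‖∑ k ∈ Finset.Ioc N n, f k‖ ≤ (2 * B + ‖ρ‖) + ‖ρ‖ * n := by
          rw [hsum]
          refine norm_add_le_of_le (norm_meanError_le hB N n) ?_
          rw [norm_mul]
          gcongr
      _ ≤ (2 * B + ‖ρ‖) * n + ‖ρ‖ * n := by
          gcongr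
          exact le_mul_of_one_le_right (by positivity) h1
      _ = (2 * B + 2 * ‖ρ‖) * n := by ring

lemma LSeries_eq_sum_add_mellin (hB : ∀ n : ℕ, ‖∑ k ∈ Finset.Icc 1 n, f k - ρ * n‖ ≤ B)
    (hN : 0 < N) (hs : 1 < s.re) (hf : LSeriesSummable f s) :
    LSeries f s = ∑ k ∈ Finset.Icc 1 N, f k * (k : ℂ) ^ (-s) + ρ * (N : ℂ) ^ (1 - s) / (s - 1)
      + s * mellin (meanError f ρ N) (-s) := by
  have hg : LSeriesSummable ((Finset.Icc 1 N : Set ℕ)ᶜ.indicator f) s := by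
    refine hf.congr' s ?_
    filter_upwards [eventually_gt_atTop N] with n hn
    exact (Set.indicator_of_mem (by simpa using fun _ => hn) f).symm
  have hO : (fun n => ∑ k ∈ Finset.Icc 1 n, (Finset.Icc 1 N : Set ℕ)ᶜ.indicator f k)
      =O[atTop] fun n => (n : ℝ) ^ (1 : ℝ) := by
    simp only [sum_Icc_indicator_compl, Real.rpow_one]
    exact .of_bound _ (.of_forall fun n => by simpa using norm_sum_Ioc_le hB N n)
  rw [LSeries_eq_sum_add_LSeries_indicator hf N,
    LSeries_eq_mul_integral _ zero_le_one hs hg hO, add_assoc, ← integral_sum_Ioc_mul_cpow hB hN hs]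
  simp only [sum_Icc_indicator_compl]

end meanError

lemma exists_norm_sum_Icc_sub_mul_le {f : ℕ → ℂ} {q : ℕ} (hq : 0 < q) (hf : Function.Periodic f q) :
    ∃ (ρ : ℂ) (B : ℝ), ∀ n : ℕ, ‖∑ k ∈ Finset.Icc 1 n, f k - ρ * n‖ ≤ B := by
  set σ : ℕ → ℂ := fun n => ∑ k ∈ Finset.Icc 1 n, f k
  have hσ (n : ℕ) : σ (n + q) = σ n + σ q := by
    induction n with
    | zero => simp [σ]
    | succ n ih =>
      have hsucc (m : ℕ) : σ (m + 1) = σ m + f (m + 1) := Finset.sum_Icc_succ_top (by lia) f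
      rw [add_right_comm, hsucc, hsucc, ih, ← hf (n + 1), add_right_comm n 1 q]
      ring
  set D : ℕ → ℂ := fun n => σ n - σ q / q * n
  have hD : Function.Periodic D q := fun n => by
    have hq0 : (q : ℂ) ≠ 0 := Nat.cast_ne_zero.2 hq.ne'
    simp only [D, hσ]
    push_cast
    field_simp
    ring
  refine ⟨σ q / q, ∑ i ∈ Finset.range q, ‖D i‖, fun n => ?_⟩
  change ‖D n‖ ≤ _
  rw [← hD.map_mod_nat]
  exact Finset.single_le_sum (f := fun i => ‖D i‖) (fun _ _ => norm_nonneg _)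
    (Finset.mem_range.2 (n.mod_lt hq))

lemma sum_Icc_rpow_sub_one_le {δ : ℝ} (hδ : 0 < δ) (hδ1 : δ ≤ 1) (N : ℕ) :
    ∑ k ∈ Finset.Icc 1 N, (k : ℝ) ^ (δ - 1) ≤ (N : ℝ) ^ δ / δ := by
  induction N with
  | zero => simp [Real.zero_rpow hδ.ne']
  | succ N ih =>
    have hN : (0 : ℝ) < N + 1 := by positivity
    have hinv : ((N : ℝ) + 1)⁻¹ ≤ 1 := inv_le_one_of_one_le₀ (by linarith [N.cast_nonneg (α := ℝ)])
    have bernoulli : (N : ℝ) ^ δ ≤ (N + 1 : ℝ) ^ δ - δ * (N + 1 : ℝ) ^ (δ - 1) := by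
      calc (N : ℝ) ^ δ = (N + 1 : ℝ) ^ δ * (1 + -(N + 1 : ℝ)⁻¹) ^ δ := by
            rw [← Real.mul_rpow hN.le (by linarith)]
            congr 1
            field_simp
            ring
        _ ≤ (N + 1 : ℝ) ^ δ * (1 + δ * -(N + 1 : ℝ)⁻¹) := by
            gcongr
            exact rpow_one_add_le_one_add_mul_self (by linarith) hδ.le hδ1
        _ = (N + 1 : ℝ) ^ δ - δ * (N + 1 : ℝ) ^ (δ - 1) := by
            rw [Real.rpow_sub_one hN.ne']
            ring
    rw [Finset.sum_Icc_succ_top (by lia)]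
    rw [le_div_iff₀ hδ] at ih ⊢
    push_cast
    linarith

lemma norm_sum_Icc_mul_cpow_neg_le {f : ℕ → ℂ} {M : ℝ} (hM : ∀ n, ‖f n‖ ≤ M) {δ : ℝ} (hδ : 0 < δ)
    (hδ1 : δ ≤ 1) {s : ℂ} (hs : 1 - δ ≤ s.re) (N : ℕ) :
    ‖∑ k ∈ Finset.Icc 1 N, f k * (k : ℂ) ^ (-s)‖ ≤ M / δ * (N : ℝ) ^ δ := by
  have hM0 : 0 ≤ M := (norm_nonneg _).trans (hM 0)
  calc _ ≤ ∑ k ∈ Finset.Icc 1 N, M * (k : ℝ) ^ (δ - 1) := norm_sum_le_of_le _ fun k hk => by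
        have hk : 1 ≤ k := (Finset.mem_Icc.1 hk).1
        rw [norm_mul, norm_natCast_cpow_of_pos hk, neg_re]
        gcongr
        · exact hM k
        · exact Nat.one_le_cast.2 hk
        · linarith
    _ ≤ M * ((N : ℝ) ^ δ / δ) := by
        rw [← Finset.mul_sum]
        gcongr
        exact sum_Icc_rpow_sub_one_le hδ hδ1 N
    _ = M / δ * (N : ℝ) ^ δ := by ring

lemma floor_rpow_neg_mul_le {T δ σ : ℝ} (hT : 1 ≤ T) (hδ : 0 ≤ δ) (hσ : 1 - δ ≤ σ) :
    (⌊T⌋₊ : ℝ) ^ (-σ) * T ≤ 2 * T ^ δ := by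
  have hN : (1 : ℝ) ≤ ⌊T⌋₊ := Nat.one_le_cast.2 ((Nat.one_le_floor_iff _).2 hT)
  calc (⌊T⌋₊ : ℝ) ^ (-σ) * T ≤ (⌊T⌋₊ : ℝ) ^ (δ - 1) * (2 * ⌊T⌋₊) := by
        gcongr
        · linarith
        · linarith [Nat.lt_floor_add_one T]
    _ = 2 * (⌊T⌋₊ : ℝ) ^ δ := by
        rw [Real.rpow_sub_one (by positivity)]
        field_simp
    _ ≤ 2 * T ^ δ := by
        gcongr
        exact Nat.floor_le (by positivity)

lemma norm_floor_cpow_one_sub_div_le {δ : ℝ} {s : ℂ} (him : 1 ≤ |s.im|) (hδ : 0 ≤ δ)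
    (hs : 1 - δ ≤ s.re) : ‖(⌊|s.im|⌋₊ : ℂ) ^ (1 - s) / (s - 1)‖ ≤ |s.im| ^ δ := by
  have hN : 1 ≤ ⌊|s.im|⌋₊ := (Nat.one_le_floor_iff _).2 him
  have hden : 1 ≤ ‖s - 1‖ := him.trans (by simpa using abs_im_le_norm (s - 1))
  rw [norm_div, norm_natCast_cpow_of_pos hN]
  calc _ ≤ (⌊|s.im|⌋₊ : ℝ) ^ (1 - s).re := div_le_self (by positivity) hden
    _ ≤ (⌊|s.im|⌋₊ : ℝ) ^ δ := by
        gcongr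
        · exact Nat.one_le_cast.2 hN
        · rw [sub_re, one_re]
          linarith
    _ ≤ |s.im| ^ δ := by
        gcongr
        exact Nat.floor_le (by positivity)

lemma norm_mul_mellin_meanError_floor_le {f : ℕ → ℂ} {ρ : ℂ} {B : ℝ}
    (hB : ∀ n : ℕ, ‖∑ k ∈ Finset.Icc 1 n, f k - ρ * n‖ ≤ B) {δ : ℝ} {s : ℂ} (him : 1 ≤ |s.im|)
    (hδ : δ ∈ Set.Icc 0 (1 / 2)) (hs : s.re ∈ Set.Icc (1 - δ) 3) :
    ‖s * mellin (meanError f ρ ⌊|s.im|⌋₊) (-s)‖ ≤ 16 * (2 * B + ‖ρ‖) * |s.im| ^ δ := by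
  set T := |s.im|
  have hB0 : 0 ≤ B := (norm_nonneg _).trans (hB 0)
  have hre : 1 / 2 ≤ s.re := by linarith [hs.1, hδ.2]
  have hsT : ‖s‖ ≤ 4 * T := by
    have := norm_le_abs_re_add_abs_im s
    rw [abs_of_pos (by linarith)] at this
    linarith [hs.2]
  rw [norm_mul]
  calc _ ≤ 4 * T * ((2 * B + ‖ρ‖) * ((⌊T⌋₊ : ℝ) ^ (-s.re) / (1 / 2))) := by
        gcongr
        refine (norm_mellin_meanError_neg_le hB ((Nat.one_le_floor_iff _).2 him)
          (by linarith)).trans ?_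
        gcongr
    _ = 8 * (2 * B + ‖ρ‖) * ((⌊T⌋₊ : ℝ) ^ (-s.re) * T) := by ring
    _ ≤ 8 * (2 * B + ‖ρ‖) * (2 * T ^ δ) := by
        gcongr 8 * (2 * B + ‖ρ‖) * ?_
        exact floor_rpow_neg_mul_le him hδ.1 hs.1
    _ = _ := by ring

section LFunction

variable {q : ℕ} [NeZero q] {Φ : ZMod q → ℂ} {ρ : ℂ} {B : ℝ}

lemma zmodLFunction_eq_sum_add_mellin
    (hB : ∀ n : ℕ, ‖∑ k ∈ Finset.Icc 1 n, Φ k - ρ * n‖ ≤ B) {N : ℕ} (hN : 0 < N) {s : ℂ}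
    (hs : 0 < s.re) (him : s.im ≠ 0) :
    ZMod.LFunction Φ s = ∑ k ∈ Finset.Icc 1 N, Φ k * (k : ℂ) ^ (-s)
      + ρ * (N : ℂ) ^ (1 - s) / (s - 1) + s * mellin (meanError (fun n => Φ n) ρ N) (-s) := by
  set U : Set ℂ := {z | 0 < z.re ∧ 0 < s.im * z.im}
  set F : ℂ → ℂ := fun z => ∑ k ∈ Finset.Icc 1 N, Φ k * (k : ℂ) ^ (-z)
    + ρ * (N : ℂ) ^ (1 - z) / (z - 1) + z * mellin (meanError (fun n => Φ n) ρ N) (-z)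
  have hU : IsOpen U := (isOpen_lt continuous_const continuous_re).inter
    (isOpen_lt continuous_const (continuous_const.mul continuous_im))
  have hconv : Convex ℝ U := (convex_halfSpace_re_gt 0).inter
    ((convex_Ioi (0 : ℝ)).linear_preimage (s.im • imLm))
  have hne : ∀ z ∈ U, z ≠ 1 := fun z hz h => by simp [U, h] at hz
  have hL : AnalyticOnNhd ℂ (ZMod.LFunction Φ) U := DifferentiableOn.analyticOnNhd
    (fun z hz => (ZMod.differentiableAt_LFunction Φ z (.inl (hne z hz))).differentiableWithinAt) hU
  have hF : AnalyticOnNhd ℂ F U := by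
    refine DifferentiableOn.analyticOnNhd
      (fun z hz => DifferentiableAt.differentiableWithinAt ?_) hU
    have hcpow {k : ℕ} (hk : 0 < k) {g : ℂ → ℂ} (hg : Differentiable ℂ g) :
        DifferentiableAt ℂ (fun z => (k : ℂ) ^ g z) z :=
      (hg z).const_cpow (.inl (Nat.cast_ne_zero.2 hk.ne'))
    refine ((DifferentiableAt.fun_sum fun k hk => ?_).add ?_).add (differentiableAt_id.mul ?_)
    · exact (hcpow (Finset.mem_Icc.1 hk).1 (by fun_prop)).const_mul _
    · exact ((hcpow hN (by fun_prop)).const_mul _).div (by fun_prop) (sub_ne_zero.2 (hne z hz))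
    · exact (differentiableAt_mellin_meanError hB hN (by simpa using hz.1)).comp z
        differentiableAt_id.neg
  have hseed : (2 + s.im * I : ℂ) ∈ U := ⟨by simp, by simpa using mul_self_pos.2 him⟩
  have heq : ZMod.LFunction Φ =ᶠ[𝓝 (2 + s.im * I)] F := by
    filter_upwards [(isOpen_lt continuous_const continuous_re).mem_nhds
      (show 1 < (2 + s.im * I : ℂ).re by simp)] with z hz
    exact (ZMod.LFunction_eq_LSeries Φ hz).trans
      (LSeries_eq_sum_add_mellin hB hN hz (ZMod.LSeriesSummable_of_one_lt_re Φ hz))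
  exact hL.eqOn_of_preconnected_of_eventuallyEq hF hconv.isPreconnected hseed heq
    ⟨hs, mul_self_pos.2 him⟩

/-- `N` is taken to be `⌊|im s|⌋`, which balances the sum against the error term. -/
lemma isBigO_zmodLFunction_stripEnd (Φ : ZMod q → ℂ) {δ : ℝ} (hδ : 0 < δ) (hδ1 : δ ≤ 1 / 2) :
    ZMod.LFunction Φ =O[stripEnd (1 - δ) 3] fun s => |s.im| ^ δ := by
  obtain ⟨ρ, B, hB⟩ := exists_norm_sum_Icc_sub_mul_le (f := fun n : ℕ => Φ n) (NeZero.pos q)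
    fun n => by simp
  have : 0 ≤ B := (norm_nonneg _).trans (hB 0)
  obtain ⟨M, hM⟩ := (Set.finite_range fun j => ‖Φ j‖).bddAbove
  have hM (j : ZMod q) : ‖Φ j‖ ≤ M := hM ⟨j, rfl⟩
  have hM0 : 0 ≤ M := (norm_nonneg _).trans (hM 0)
  refine .of_bound (M / δ + ‖ρ‖ + 16 * (2 * B + ‖ρ‖))
    (eventually_stripEnd.2 ⟨1, fun s him hs => ?_⟩)
  have hN : 1 ≤ ⌊|s.im|⌋₊ := (Nat.one_le_floor_iff _).2 him
  have hsum : ‖∑ k ∈ Finset.Icc 1 ⌊|s.im|⌋₊, Φ k * (k : ℂ) ^ (-s)‖ ≤ M / δ * |s.im| ^ δ := by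
    refine (norm_sum_Icc_mul_cpow_neg_le (fun n => hM n) hδ (by linarith) hs.1 _).trans ?_
    gcongr
    exact Nat.floor_le (by positivity)
  have hpole : ‖ρ * (⌊|s.im|⌋₊ : ℂ) ^ (1 - s) / (s - 1)‖ ≤ ‖ρ‖ * |s.im| ^ δ := by
    rw [mul_div_assoc, norm_mul]
    gcongr
    exact norm_floor_cpow_one_sub_div_le him hδ.le hs.1
  have herror := norm_mul_mellin_meanError_floor_le hB him ⟨hδ.le, hδ1⟩ hs
  rw [zmodLFunction_eq_sum_add_mellin hB hN (by linarith [hs.1]) (abs_pos.1 (by linarith)),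
    Real.norm_of_nonneg (by positivity), add_mul, add_mul]
  exact norm_add_le_of_le (norm_add_le_of_le hsum hpole) herror

lemma hasStripOrder_zmodLFunction (Φ : ZMod q → ℂ) (n : ℕ) :
    HasStripOrder n 0 (ZMod.LFunction Φ) := by
  refine hasStripOrder_of_isBigO (fun r hr => ?_) n
  set δ := min r (1 / 2)
  have hδ : 0 < δ := lt_min hr one_half_pos
  refine ⟨δ, hδ, eventually_stripEnd.2 ⟨1, fun s hs _ => ?_⟩, ?_⟩
  · have hs1 : s ≠ 1 := fun h => by norm_num [h] at hs
    refine DifferentiableOn.analyticAt (s := {1}ᶜ) (fun z hz => ?_) (isOpen_ne.mem_nhds hs1)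
    exact (ZMod.differentiableAt_LFunction Φ z (.inl hz)).differentiableWithinAt
  · exact ((isBigO_zmodLFunction_stripEnd Φ hδ (min_le_right ..)).mono
      (stripEnd_mono le_rfl (by linarith [min_le_right r (1 / 2)]))).trans
      (isBigO_abs_im_rpow_stripEnd (min_le_left ..) _ _)

end LFunction

lemma HasStripOrder.exists_norm_sub_le {f : ℂ → ℂ} {r r' : ℝ} (hf : HasStripOrder 1 r f)
    (hr : r < r') : ∃ C T : ℝ, ∀ t, T ≤ |t| → ∀ z ∈ Set.Icc 1 2 ×ℂ {t}, ∀ w ∈ Set.Icc 1 2 ×ℂ {t},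
      ‖f w - f z‖ ≤ C * |t| ^ r' * ‖w - z‖ := by
  obtain ⟨C, hC⟩ := (hf.2 1 le_rfl r' hr).bound
  obtain ⟨T, hT⟩ := eventually_stripEnd.1 (hf.1.and hC)
  have hconv (t : ℝ) : Convex ℝ (Set.Icc 1 2 ×ℂ {t}) :=
    ((convex_Icc (1 : ℝ) 2).linear_preimage reLm).inter ((convex_singleton t).linear_preimage imLm)
  refine ⟨C, T, fun t ht z hz w hw => Convex.norm_image_sub_le_of_norm_deriv_le (𝕜 := ℂ)
    (fun u hu => ?_) (fun u hu => ?_) (hconv t) hz hw⟩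
  · exact (hT u (by rwa [hu.2]) hu.1).1.differentiableAt
  · have := (hT u (by rwa [hu.2]) hu.1).2
    rwa [iteratedDeriv_one, hu.2, Real.norm_of_nonneg (by positivity)] at this

section DirichletCharacter

open DirichletCharacter

variable {q : ℕ} [NeZero q]

lemma hasStripOrder_LFunction (χ : DirichletCharacter ℂ q) (n : ℕ) :
    HasStripOrder n 0 (LFunction χ) :=
  hasStripOrder_zmodLFunction χ n

lemma exists_norm_LFunctionTrivChar_le (q : ℕ) [NeZero q] :
    ∃ C > 0, ∀ x ∈ Set.Ioc (0 : ℝ) 1, ‖LFunctionTrivChar q (1 + x)‖ ≤ C / x := by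
  obtain ⟨C, hC⟩ := isCompact_Icc.exists_bound_of_continuousOn (s := Set.Icc (0 : ℝ) 1)
    (f := fun x : ℝ => LFunctionTrivChar₁ q (1 + x))
    ((differentiable_LFunctionTrivChar₁ q).continuous.comp (by fun_prop)).continuousOn
  refine ⟨max C 1, by positivity, fun x hx => ?_⟩
  have hx0 : (x : ℂ) ≠ 0 := ofReal_ne_zero.2 hx.1.ne'
  have hbound := hC x ⟨hx.1.le, hx.2⟩
  rw [LFunctionTrivChar₁, Function.update_of_ne (by simpa using hx0), add_sub_cancel_left, norm_mul,
    norm_real, Real.norm_of_nonneg hx.1.le] at hbound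
  rw [le_div_iff₀' hx.1]
  exact hbound.trans (le_max_left ..)

lemma exists_norm_LFunction_two_mul_le (χ : DirichletCharacter ℂ q) {η : ℝ} (hη : 0 < η) :
    ∃ C > 0, ∃ T : ℝ, ∀ t : ℝ, T ≤ |t| → ∀ x ∈ Set.Ioc (0 : ℝ) 1,
      ‖LFunction χ (1 + x + 2 * I * t)‖ ≤ C * |t| ^ η := by
  obtain ⟨C, hC, hbound⟩ := ((hasStripOrder_LFunction χ 0).2 0 le_rfl η hη).exists_pos
  obtain ⟨T, hT⟩ := eventually_stripEnd.1 hbound.bound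
  refine ⟨C * 2 ^ η, by positivity, T, fun t ht x hx => ?_⟩
  have him : (1 + x + 2 * I * t : ℂ).im = 2 * t := by simp
  have hre : (1 + x + 2 * I * t : ℂ).re = 1 + x := by simp
  have h := hT (1 + x + 2 * I * t) (by rw [him, abs_mul, abs_two]; linarith [abs_nonneg t])
    ⟨by linarith [hx.1], by linarith [hx.2]⟩
  rwa [iteratedDeriv_zero, him, abs_mul, abs_two, Real.mul_rpow zero_le_two (abs_nonneg t),
    Real.norm_of_nonneg (by positivity), ← mul_assoc] at h

/-- The inequality `3 + 4 cos θ + cos 2θ ≥ 0` in its quantitative form. -/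
lemma exists_mul_rpow_le_norm_LFunction (χ : DirichletCharacter ℂ q) {η : ℝ} (hη : 0 < η) :
    ∃ c > 0, ∃ T : ℝ, ∀ t : ℝ, T ≤ |t| → ∀ x ∈ Set.Ioc (0 : ℝ) 1,
      c * x ^ (3 / 4 : ℝ) ≤ |t| ^ η * ‖LFunction χ (1 + x + I * t)‖ := by
  obtain ⟨C₁, hC₁, hTriv⟩ := exists_norm_LFunctionTrivChar_le q
  obtain ⟨C₂, hC₂, T, hSq⟩ := exists_norm_LFunction_two_mul_le (χ ^ 2) hη
  set K := C₁ ^ 3 * C₂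
  have hK : 0 < K := by positivity
  refine ⟨K ^ (-(1 / 4) : ℝ), by positivity, max T 1, fun t ht x hx => ?_⟩
  obtain ⟨hT, ht1⟩ := max_le_iff.1 ht
  have hη1 : 1 ≤ |t| ^ η := Real.one_le_rpow ht1 hη.le
  have hx0 : 0 < x := hx.1
  set ℓ := ‖LFunction χ (1 + x + I * t)‖
  have h341 : 1 ≤ (C₁ / x) ^ 3 * ℓ ^ 4 * (C₂ * |t| ^ η) := by
    refine (norm_LFunction_product_ge_one χ hx0 t).trans ?_
    rw [norm_mul, norm_mul, norm_pow, norm_pow]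
    gcongr
    · exact hTriv x hx
    · exact hSq t hT x hx
  have hpow : x ^ 3 ≤ K * (|t| ^ η * ℓ) ^ 4 := by
    calc x ^ 3 ≤ x ^ 3 * ((C₁ / x) ^ 3 * ℓ ^ 4 * (C₂ * |t| ^ η)) :=
          le_mul_of_one_le_right (by positivity) h341
      _ = K * ℓ ^ 4 * |t| ^ η := by
          field_simp
          ring
      _ ≤ K * ℓ ^ 4 * (|t| ^ η) ^ 4 := by
          gcongr
          exact le_self_pow₀ hη1 four_ne_zero
      _ = K * (|t| ^ η * ℓ) ^ 4 := by ring
  have hK4 : (K ^ (-(1 / 4) : ℝ)) ^ 4 = K⁻¹ := by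
    rw [← Real.rpow_mul_natCast hK.le, ← Real.rpow_neg_one]
    norm_num
  have hx4 : (x ^ (3 / 4 : ℝ)) ^ 4 = x ^ 3 := by
    rw [← Real.rpow_mul_natCast hx0.le, ← Real.rpow_natCast]
    norm_num
  refine le_of_pow_le_pow_left₀ four_ne_zero (by positivity) ?_
  rwa [mul_pow, hK4, hx4, inv_mul_le_iff₀ hK]

lemma pow_three_le_rpow_of_pow_four_le {w x : ℝ} (hw : 0 ≤ w) (h : w ^ 4 ≤ x) :
    w ^ 3 ≤ x ^ (3 / 4 : ℝ) := by
  calc w ^ 3 = (w ^ 4) ^ (3 / 4 : ℝ) := by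
        rw [← Real.rpow_natCast, ← Real.rpow_natCast, ← Real.rpow_mul hw]
        norm_num
    _ ≤ x ^ (3 / 4 : ℝ) := by gcongr

lemma le_norm_of_two_mul_le_norm_right {f : ℂ → ℂ} {t K δ μ : ℝ} (hδ : δ ∈ Set.Icc (0 : ℝ) 1)
    (hK : 0 ≤ K) (hKδ : K * δ ≤ μ)
    (hLip : ∀ z ∈ Set.Icc 1 2 ×ℂ {t}, ∀ w ∈ Set.Icc 1 2 ×ℂ {t}, ‖f w - f z‖ ≤ K * ‖w - z‖)
    (hright : ∀ x ∈ Set.Icc δ 1, 2 * μ ≤ ‖f (1 + x + I * t)‖) {s : ℂ}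
    (hs : s ∈ Set.Icc 1 2 ×ℂ {t}) : μ ≤ ‖f s‖ := by
  obtain ⟨hre, him : s.im = t⟩ := hs
  have hμ : 0 ≤ μ := (mul_nonneg hK hδ.1).trans hKδ
  rcases le_or_gt δ (s.re - 1) with h | h
  · have hs : 1 + ((s.re - 1 : ℝ) : ℂ) + I * t = s := by apply Complex.ext <;> simp [him]
    have := hright (s.re - 1) ⟨h, by linarith [hre.2]⟩
    rw [hs] at this
    linarith
  · have hsub : (1 + δ + I * t : ℂ) - s = (1 + δ - s.re : ℝ) := by
      apply Complex.ext <;> simp [him]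
    have hdist : ‖(1 + δ + I * t : ℂ) - s‖ ≤ δ := by
      rw [hsub, norm_real, Real.norm_of_nonneg (by linarith)]
      linarith [hre.1]
    have hdiff : ‖f (1 + δ + I * t) - f s‖ ≤ μ := by
      refine ((hLip s ⟨hre, him⟩ _ ⟨?_, ?_⟩).trans (by gcongr)).trans hKδ
      · simpa [one_add_one_eq_two] using ⟨hδ.1, by linarith [hδ.2]⟩
      · simp
    linarith [hright δ ⟨le_rfl, hδ.2⟩, norm_sub_norm_le (f (1 + δ + I * t)) (f s)]

lemma exists_rpow_le_norm_LFunction (χ : DirichletCharacter ℂ q) {η : ℝ} (hη : 0 < η) :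
    ∃ c > 0, ∀ᶠ s in stripEnd 1 2, c * |s.im| ^ (-(7 * η)) ≤ ‖LFunction χ s‖ := by
  obtain ⟨c, hc, T₁, hlow⟩ := exists_mul_rpow_le_norm_LFunction χ hη
  obtain ⟨D', T₂, hLip⟩ := (hasStripOrder_LFunction χ 1).exists_norm_sub_le hη
  set D := max D' c
  have hD : 0 < D := hc.trans_le (le_max_right ..)
  set m := c / (2 * D)
  have hm : 0 < m := by positivity
  have hm1 : m ≤ 1 := (div_le_one (by positivity)).2 (by linarith [le_max_right D' c])
  refine ⟨c / 2 * m ^ 3, by positivity,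
    eventually_stripEnd.2 ⟨max (max T₁ T₂) 1, fun s him hs => ?_⟩⟩
  set T := |s.im| ^ η
  have hT : 1 ≤ T := Real.one_le_rpow ((le_max_right ..).trans him) hη.le
  -- chosen so that `D * T * w ^ 4`, the variation of `L` over a distance `w ^ 4`, is half of the
  -- lower bound `c * w ^ 3 / T` at `1 + w ^ 4 + I * t`
  set w := m / T ^ 2
  have hw : 0 < w := by positivity
  have hw1 : w ≤ 1 := (div_le_self hm.le (one_le_pow₀ hT)).trans hm1
  have hbalance : D * T * w ^ 4 = c / 2 * w ^ 3 / T := by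
    simp only [w, m]
    field_simp
  have hpow : |s.im| ^ (-(7 * η)) = (T ^ 7)⁻¹ := by
    rw [Real.rpow_neg (abs_nonneg _), mul_comm, Real.rpow_mul (abs_nonneg _)]
    norm_cast
  have hvalue : c / 2 * m ^ 3 * |s.im| ^ (-(7 * η)) = c / 2 * w ^ 3 / T := by
    rw [hpow]
    simp only [w]
    field_simp
  rw [hvalue]
  refine le_norm_of_two_mul_le_norm_right ⟨by positivity, pow_le_one₀ hw.le hw1⟩ (by positivity)
    hbalance.le (fun z hz u hu => ?_) (fun x hx => ?_) ⟨hs, rfl⟩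
  · refine (hLip s.im ((le_max_right ..).trans ((le_max_left ..).trans him)) z hz u hu).trans ?_
    gcongr
    exact le_max_left ..
  · have hx0 : 0 < x := (pow_pos hw 4).trans_le hx.1
    have := hlow s.im ((le_max_left ..).trans ((le_max_left ..).trans him)) x ⟨hx0, hx.2⟩
    calc 2 * (c / 2 * w ^ 3 / T) = c * w ^ 3 / T := by ring
      _ ≤ ‖LFunction χ (1 + x + I * s.im)‖ := by
          rw [div_le_iff₀' (by positivity)]
          refine le_trans ?_ this
          gcongr
          exact pow_three_le_rpow_of_pow_four_le hw.le hx.1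

lemma eventually_LFunction_ne_zero (χ : DirichletCharacter ℂ q) :
    ∀ᶠ s in stripEnd 1 2, LFunction χ s ≠ 0 :=
  eventually_stripEnd.2 ⟨1, fun s him hs => LFunction_ne_zero_of_one_le_re χ
    (.inr fun h => by norm_num [h] at him) hs.1⟩

lemma hasStripOrder_logDeriv_LFunction (χ : DirichletCharacter ℂ q) (n : ℕ) :
    HasStripOrder n 0 (logDeriv (LFunction χ)) := by
  refine (hasStripOrder_LFunction χ (n + 1)).logDeriv (eventually_LFunction_ne_zero χ)
    fun r hr => ?_
  obtain ⟨c, hc, h⟩ := exists_rpow_le_norm_LFunction χ (η := r / 7) (by linarith)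
  refine .of_bound c⁻¹ ?_
  filter_upwards [h, (tendsto_abs_im_stripEnd 1 2).eventually_gt_atTop 0] with s hs him
  have : 0 < c * |s.im| ^ (-(7 * (r / 7))) := by positivity
  calc ‖(LFunction χ s)⁻¹‖ ≤ (c * |s.im| ^ (-(7 * (r / 7))))⁻¹ := by
        rw [norm_inv]
        gcongr
    _ = c⁻¹ * ‖|s.im| ^ r‖ := by
        rw [mul_div_cancel₀ _ (by norm_num), Real.rpow_neg him.le, mul_inv, inv_inv,
          Real.norm_of_nonneg (by positivity)]

lemma logDeriv_LFunctionTrivChar₁ {s : ℂ} (hs : s ≠ 1)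
    (hL : LFunction (1 : DirichletCharacter ℂ q) s ≠ 0) :
    logDeriv (LFunctionTrivChar₁ q) s
      = logDeriv (LFunction (1 : DirichletCharacter ℂ q)) s + (s - 1)⁻¹ := by
  have := sub_ne_zero.2 hs
  rw [logDeriv_apply, logDeriv_apply, deriv_LFunctionTrivChar₁_apply_of_ne_one _ hs,
    LFunctionTrivChar₁, Function.update_of_ne hs, LFunctionTrivChar]
  field_simp

lemma hasStripOrder_logDeriv_LFunctionTrivChar₁ (q : ℕ) [NeZero q] (n : ℕ) :
    HasStripOrder n 0 (logDeriv (LFunctionTrivChar₁ q)) := by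
  refine ((hasStripOrder_logDeriv_LFunction (1 : DirichletCharacter ℂ q) n).add
    ((hasStripOrder_inv_sub_const n 1).mono (by norm_num))).congr
    (eventually_stripEnd.2 ⟨1, fun s him hs => ?_⟩)
  have hs1 : s ≠ 1 := fun h => by norm_num [h] at him
  have hd : ContinuousAt (LFunction (1 : DirichletCharacter ℂ q)) s :=
    (differentiableAt_LFunction _ s (.inl hs1)).continuousAt
  filter_upwards [isOpen_ne.mem_nhds hs1,
    hd.eventually_ne (LFunction_ne_zero_of_one_le_re 1 (.inr hs1) hs.1)] with z hz hz'
  exact (logDeriv_LFunctionTrivChar₁ hz hz').symm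

end DirichletCharacter

section LFunctionResidueClassAux

open DirichletCharacter ArithmeticFunction.vonMangoldt

variable {q : ℕ} [NeZero q] (a : ZMod q)

open scoped Classical in
lemma LFunctionResidueClassAux_eq_logDeriv :
    LFunctionResidueClassAux a = fun s => -(q.totient : ℂ)⁻¹ * (logDeriv (LFunctionTrivChar₁ q) s +
      ∑ χ ∈ ({1}ᶜ : Finset (DirichletCharacter ℂ q)), χ a⁻¹ * logDeriv (LFunction χ) s) := by
  funext s
  simp only [LFunctionResidueClassAux, logDeriv_apply, mul_div_assoc]
  rw [neg_div, sub_eq_add_neg, ← neg_add, neg_mul, mul_neg]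
  congr!

lemma hasStripOrder_LFunctionResidueClassAux (n : ℕ) :
    HasStripOrder n 0 (LFunctionResidueClassAux a) := by
  classical
  rw [LFunctionResidueClassAux_eq_logDeriv]
  exact ((hasStripOrder_logDeriv_LFunctionTrivChar₁ q n).add (.sum fun χ _ =>
    (hasStripOrder_logDeriv_LFunction χ n).const_mul _)).const_mul _

lemma LFunctionTrivChar₁_ne_zero_of_one_le_re {s : ℂ} (hs : 1 ≤ s.re) :
    LFunctionTrivChar₁ q s ≠ 0 := by
  rcases eq_or_ne s 1 with rfl | hs1
  · exact LFunctionTrivChar₁_apply_one_ne_zero q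
  · rw [LFunctionTrivChar₁, Function.update_of_ne hs1]
    exact mul_ne_zero (sub_ne_zero.2 hs1) (LFunction_ne_zero_of_one_le_re 1 (.inr hs1) hs)

lemma analyticAt_LFunctionResidueClassAux {s : ℂ} (hs : 1 ≤ s.re) :
    AnalyticAt ℂ (LFunctionResidueClassAux a) s := by
  classical
  have hlog {f : ℂ → ℂ} (hf : Differentiable ℂ f) (h0 : f s ≠ 0) : AnalyticAt ℂ (logDeriv f) s :=
    (hf.analyticAt s).deriv.div (hf.analyticAt s) h0
  rw [LFunctionResidueClassAux_eq_logDeriv]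
  have hpole := hlog (differentiable_LFunctionTrivChar₁ q)
    (LFunctionTrivChar₁_ne_zero_of_one_le_re hs)
  refine analyticAt_const.mul
    (hpole.add (Finset.analyticAt_fun_sum _ fun χ hχ => analyticAt_const.mul ?_))
  have hχ : χ ≠ 1 := by simpa using hχ
  exact hlog (differentiable_LFunction hχ) (LFunction_ne_zero_of_one_le_re χ (.inl hχ) hs)

end LFunctionResidueClassAux

section Perron

lemma hasMellin_congr {f g : ℝ → ℂ} {s m : ℂ} (hf : HasMellin f s m)
    (hfg : Set.EqOn f g (Set.Ioi 0)) :
    HasMellin g s m := by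
  have h : Set.EqOn (fun t : ℝ => (t : ℂ) ^ (s - 1) • f t) (fun t => (t : ℂ) ^ (s - 1) • g t)
      (Set.Ioi 0) :=
    fun t ht => by simp only [hfg ht]
  exact ⟨hf.1.congr_fun h measurableSet_Ioi,
    (setIntegral_congr_fun measurableSet_Ioi h).symm.trans hf.2⟩

lemma hasMellin_max_one_sub {s : ℂ} (hs : 0 < s.re) :
    HasMellin (fun u : ℝ => ((max (1 - u) 0 : ℝ) : ℂ)) s (s⁻¹ * (s + 1)⁻¹) := by
  have h₀ := hasMellin_one_Ioc hs
  have h₁ := hasMellin_cpow_Ioc 1 (s := s) (by rw [one_re]; linarith)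
  have hsub := hasMellin_sub h₀.1 h₁.1
  have hs0 : s ≠ 0 := fun h => by simp [h] at hs
  have hs1 : s + 1 ≠ 0 := fun h => by
    have := congrArg re h
    rw [add_re, one_re, zero_re] at this
    linarith
  rw [h₀.2, h₁.2, show 1 / s - 1 / (s + 1) = s⁻¹ * (s + 1)⁻¹ by field_simp; ring] at hsub
  refine hasMellin_congr hsub fun u (hu : 0 < u) => ?_
  by_cases hu1 : u ≤ 1
  · simp [hu, hu1]
  · simp [hu1, (not_le.1 hu1).le]

lemma hasMellin_max_one_sub_sq_div {s : ℂ} (hs : 1 < s.re) :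
    HasMellin (fun u : ℝ => ((max (1 - u) 0 ^ 2 / (2 * u) : ℝ) : ℂ)) s
      ((s - 1)⁻¹ * (s⁻¹ * (s + 1)⁻¹)) := by
  have hk := hasMellin_max_one_sub (s := s) (by linarith)
  have hk' := hasMellin_max_one_sub (s := s - 1) (by rw [sub_re, one_re]; linarith)
  have hshift : HasMellin (fun u : ℝ => (u : ℂ) ^ (-1 : ℂ) • ((max (1 - u) 0 : ℝ) : ℂ)) s
      ((s - 1)⁻¹ * s⁻¹) := by
    rw [HasMellin, MellinConvergent.cpow_smul, mellin_cpow_smul, ← sub_eq_add_neg]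
    rwa [HasMellin, sub_add_cancel] at hk'
  have hs0 : s ≠ 0 := fun h => by norm_num [h] at hs
  have hs1 : s - 1 ≠ 0 := fun h => by norm_num [sub_eq_zero.1 h] at hs
  have hs2 : s + 1 ≠ 0 := fun h => by norm_num [eq_neg_of_add_eq_zero_left h] at hs
  have hsub := hasMellin_sub hshift.1 hk.1
  have h2 := hasMellin_const_smul hsub.1 (2⁻¹ : ℂ)
  rw [hsub.2, hshift.2, hk.2, show (2⁻¹ : ℂ) • ((s - 1)⁻¹ * s⁻¹ - s⁻¹ * (s + 1)⁻¹) =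
    (s - 1)⁻¹ * (s⁻¹ * (s + 1)⁻¹) by rw [smul_eq_mul]; field_simp; ring] at h2
  refine hasMellin_congr h2 fun u (hu : 0 < u) => ?_
  simp only [cpow_neg_one, smul_eq_mul]
  have hu0 : (u : ℂ) ≠ 0 := ofReal_ne_zero.2 hu.ne'
  rcases le_total u 1 with hu1 | hu1
  · rw [max_eq_left (by linarith)]
    push_cast
    field_simp
  · rw [max_eq_right (by linarith)]
    simp

lemma verticalIntegrable_inv_mul_inv_add_one {c : ℝ} (hc : 0 < c) :
    VerticalIntegrable (fun s : ℂ => s⁻¹ * (s + 1)⁻¹) c := by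
  have hne (t : ℝ) (b : ℝ) (hb : 0 ≤ b) : (c + t * I + b : ℂ) ≠ 0 := fun h => by
    have := congrArg re h
    simp only [add_re, ofReal_re, re_ofReal_mul, I_re, mul_zero, add_zero, zero_re] at this
    linarith
  have hcont : Continuous fun t : ℝ => (c + t * I : ℂ)⁻¹ * (c + t * I + 1)⁻¹ :=
    .mul (.inv₀ (by fun_prop) fun t => by simpa using hne t 0 le_rfl)
      (.inv₀ (by fun_prop) fun t => by simpa using hne t 1 zero_le_one)
  refine ((integrable_inv_one_add_sq.comp_div hc.ne').const_mul (c ^ 2)⁻¹).mono'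
    hcont.aestronglyMeasurable (.of_forall fun t => ?_)
  have hsq : c ^ 2 * (1 + (t / c) ^ 2) = ‖(c + t * I : ℂ)‖ ^ 2 := by
    rw [norm_add_mul_I, Real.sq_sqrt (by positivity)]
    field_simp
  have hle : ‖(c + t * I : ℂ)‖ ≤ ‖(c + t * I + 1 : ℂ)‖ := by
    rw [norm_add_mul_I, show (c + t * I + 1 : ℂ) = (c + 1 : ℝ) + t * I by push_cast; ring,
      norm_add_mul_I]
    gcongr
    linarith
  have hpos : 0 < ‖(c + t * I : ℂ)‖ := norm_pos_iff.2 (by simpa using hne t 0 le_rfl)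
  rw [← mul_inv, hsq, norm_mul, norm_inv, norm_inv, sq, mul_inv]
  gcongr

lemma verticalIntegrable_inv_sub_one_mul {c : ℝ} (hc : 1 < c) :
    VerticalIntegrable (fun s : ℂ => (s - 1)⁻¹ * (s⁻¹ * (s + 1)⁻¹)) c := by
  have hre (t : ℝ) : c - 1 ≤ ‖(c + t * I - 1 : ℂ)‖ := by
    simpa using re_le_norm (c + t * I - 1 : ℂ)
  have hcont : Continuous fun t : ℝ => (c + t * I - 1 : ℂ)⁻¹ :=
    .inv₀ (by fun_prop) fun t => norm_pos_iff.1 ((sub_pos.2 hc).trans_le (hre t))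
  exact (verticalIntegrable_inv_mul_inv_add_one (zero_lt_one.trans hc)).bdd_mul
    hcont.aestronglyMeasurable (.of_forall fun t => by
      rw [norm_inv]; exact inv_anti₀ (sub_pos.2 hc) (hre t))

lemma mellinInv_eq_of_hasMellin {g : ℝ → ℂ} {F : ℂ → ℂ} {c x : ℝ} (hx : 0 < x)
    (hg : ∀ t : ℝ, HasMellin g (c + t * I) (F (c + t * I))) (hF : VerticalIntegrable F c)
    (hgx : ContinuousAt g x) : mellinInv c F x = g x := by
  rw [← mellinInv_mellin_eq c g hx (by simpa using (hg 0).1)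
    (by simpa only [VerticalIntegrable, (hg _).2] using hF) hgx]
  simp only [mellinInv, (hg _).2]

lemma mellinInv_inv_mul_inv_add_one {c x : ℝ} (hc : 0 < c) (hx : 0 < x) :
    mellinInv c (fun s : ℂ => s⁻¹ * (s + 1)⁻¹) x = (max (1 - x) 0 : ℝ) :=
  mellinInv_eq_of_hasMellin (g := fun u => (max (1 - u) 0 : ℝ)) hx
    (fun t => hasMellin_max_one_sub (by simpa using hc))
    (verticalIntegrable_inv_mul_inv_add_one hc) (by fun_prop)

lemma mellinInv_inv_sub_one_mul {c x : ℝ} (hc : 1 < c) (hx : 0 < x) :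
    mellinInv c (fun s : ℂ => (s - 1)⁻¹ * (s⁻¹ * (s + 1)⁻¹)) x =
      (max (1 - x) 0 ^ 2 / (2 * x) : ℝ) := by
  have hx0 : 2 * x ≠ 0 := by positivity
  exact mellinInv_eq_of_hasMellin (g := fun u => (max (1 - u) 0 ^ 2 / (2 * u) : ℝ)) hx
    (fun t => hasMellin_max_one_sub_sq_div (by simpa using hc))
    (verticalIntegrable_inv_sub_one_mul hc) (by fun_prop (disch := assumption))

lemma mellinInv_term_mul (f : ℕ → ℂ) {n : ℕ} (hn : n ≠ 0) {c x : ℝ} (hc : 0 < c) (hx : 0 < x) :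
    mellinInv c (fun s => LSeries.term f s n * (s⁻¹ * (s + 1)⁻¹)) x⁻¹ =
      f n * (max (1 - n / x) 0 : ℝ) := by
  have hn0 : (0 : ℝ) < n := by positivity
  have hcpow (s : ℂ) : ((x⁻¹ : ℝ) : ℂ) ^ (-s) * LSeries.term f s n =
      f n * ((n / x : ℝ) : ℂ) ^ (-s) := by
    rw [LSeries.term_of_ne_zero hn, div_eq_inv_mul (n : ℝ), ofReal_mul,
      mul_cpow_ofReal_nonneg (inv_nonneg.2 hx.le) hn0.le, ofReal_natCast, cpow_neg (n : ℂ)]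
    ring
  rw [← mellinInv_inv_mul_inv_add_one hc (div_pos hn0 hx), mellinInv, mellinInv]
  simp only [smul_eq_mul, ← mul_assoc, hcpow]
  simp only [mul_assoc, integral_const_mul, mul_smul_comm]

lemma norm_cpow_neg_add_mul_I {x : ℝ} (hx : 0 < x) (c t : ℝ) :
    ‖(x : ℂ) ^ (-(c + t * I))‖ = x ^ (-c) := by
  rw [norm_cpow_eq_rpow_re_of_pos hx]
  simp

lemma integrable_cpow_neg_smul {F : ℂ → ℂ} {c x : ℝ} (hx : 0 < x) (hF : VerticalIntegrable F c) :
    Integrable fun t : ℝ => (x : ℂ) ^ (-(c + t * I)) • F (c + t * I) := by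
  have hcont : Continuous fun t : ℝ => (x : ℂ) ^ (-(c + t * I)) :=
    .const_cpow (by fun_prop) (.inl (ofReal_ne_zero.2 hx.ne'))
  exact hF.bdd_smul _ hcont.aestronglyMeasurable
    (.of_forall fun t => (norm_cpow_neg_add_mul_I hx c t).le)

lemma mellinInv_add {F G : ℂ → ℂ} {c x : ℝ} (hx : 0 < x) (hF : VerticalIntegrable F c)
    (hG : VerticalIntegrable G c) :
    mellinInv c (fun s => F s + G s) x = mellinInv c F x + mellinInv c G x := by
  simp only [mellinInv, smul_add,
    integral_add (integrable_cpow_neg_smul hx hF) (integrable_cpow_neg_smul hx hG)]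

lemma mellinInv_const_mul (κ : ℂ) (F : ℂ → ℂ) (c x : ℝ) :
    mellinInv c (fun s => κ * F s) x = κ * mellinInv c F x := by
  simp only [mellinInv, smul_eq_mul, mul_left_comm _ κ, integral_const_mul, mul_smul_comm]

lemma hasSum_mellinInv {ι : Type*} [Countable ι] {F : ι → ℂ → ℂ} {c x : ℝ} (hx : 0 < x)
    (hF : ∀ i, VerticalIntegrable (F i) c)
    (hF' : Summable fun i => ∫ t : ℝ, ‖F i (c + t * I)‖) :
    HasSum (fun i => mellinInv c (F i) x) (mellinInv c (fun s => ∑' i, F i s) x) := by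
  have hsum := hasSum_integral_of_summable_integral_norm
    (fun i => integrable_cpow_neg_smul hx (hF i))
    (by simpa only [norm_smul, norm_cpow_neg_add_mul_I hx, integral_const_mul] using
      hF'.mul_left (x ^ (-c)))
  simp only [smul_eq_mul, tsum_mul_left] at hsum
  exact hsum.const_smul _

lemma norm_term_add_mul_I (f : ℕ → ℂ) (c t : ℝ) (n : ℕ) :
    ‖LSeries.term f (c + t * I) n‖ = ‖LSeries.term f c n‖ := by
  simp [LSeries.norm_term_eq]

lemma verticalIntegrable_term_mul (f : ℕ → ℂ) (n : ℕ) {c : ℝ} (hc : 0 < c) :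
    VerticalIntegrable (fun s => LSeries.term f s n * (s⁻¹ * (s + 1)⁻¹)) c := by
  have hcont : Continuous fun t : ℝ => LSeries.term f (c + t * I) n := by
    rcases eq_or_ne n 0 with rfl | hn
    · simpa only [LSeries.term_zero] using continuous_const
    · simp only [LSeries.term_of_ne_zero hn, ← cpow_neg, div_eq_mul_inv]
      exact continuous_const.mul (.const_cpow (by fun_prop) (.inl (Nat.cast_ne_zero.2 hn)))
  exact (verticalIntegrable_inv_mul_inv_add_one hc).bdd_mul hcont.aestronglyMeasurable
    (.of_forall fun t => (norm_term_add_mul_I f c t n).le)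

/-- Perron's formula, smoothed by a Cesàro weight. -/
lemma mellinInv_LSeries_mul {f : ℕ → ℂ} {c x : ℝ} (hc : 0 < c) (hf : LSeriesSummable f c)
    (hx : 0 < x) : mellinInv c (fun s => LSeries f s * (s⁻¹ * (s + 1)⁻¹)) x⁻¹ =
      ∑ n ∈ Finset.Ioc 0 ⌊x⌋₊, f n * (1 - n / x) := by
  have hsum := hasSum_mellinInv (F := fun n s => LSeries.term f s n * (s⁻¹ * (s + 1)⁻¹))
    (inv_pos.2 hx) (fun n => verticalIntegrable_term_mul f n hc)
    (by simpa only [norm_mul, norm_term_add_mul_I, integral_const_mul] using hf.norm.mul_right _)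
  simp only [tsum_mul_right] at hsum
  refine hsum.tsum_eq.symm.trans ((tsum_eq_sum (s := Finset.Ioc 0 ⌊x⌋₊) fun n hn => ?_).trans
    (Finset.sum_congr rfl fun n hn => ?_))
  · rcases eq_or_ne n 0 with rfl | hn0
    · simp [mellinInv]
    · have hxn : x < n := by simpa [Nat.pos_of_ne_zero hn0, Nat.floor_lt hx.le] using hn
      rw [mellinInv_term_mul f hn0 hc hx,
        max_eq_right (sub_nonpos.2 ((one_le_div hx).2 hxn.le)), ofReal_zero, mul_zero]
  · rw [Finset.mem_Ioc, Nat.le_floor_iff hx.le] at hn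
    rw [mellinInv_term_mul f hn.1.ne' hc hx, max_eq_left (sub_nonneg.2 ((div_le_one hx).2 hn.2))]
    push_cast
    rfl

end Perron

section FourierDecay

open scoped FourierTransform ContDiff

lemma analyticAt_iteratedDeriv {f : ℂ → ℂ} {z : ℂ} (hf : AnalyticAt ℂ f z) (n : ℕ) :
    AnalyticAt ℂ (iteratedDeriv n f) z := by
  simpa only [iteratedDeriv_eq_iterate] using hf.iterated_deriv n

lemma iteratedDeriv_comp_add_ofReal_mul {H : ℂ → ℂ} {b w : ℂ}
    (hH : ∀ t : ℝ, AnalyticAt ℂ H (b + t * w)) (n : ℕ) :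
    iteratedDeriv n (fun t : ℝ => H (b + t * w)) =
      fun t : ℝ => w ^ n * iteratedDeriv n H (b + t * w) := by
  induction n with
  | zero => simp
  | succ n ih =>
    rw [iteratedDeriv_succ, ih]
    funext t
    have hd : HasDerivAt (iteratedDeriv n H) (iteratedDeriv (n + 1) H (b + t * w)) (b + t * w) := by
      rw [iteratedDeriv_succ]
      exact (analyticAt_iteratedDeriv (hH t) n).differentiableAt.hasDerivAt
    have hline : HasDerivAt (fun z : ℂ => b + z * w) w t := by
      simpa using ((hasDerivAt_id (t : ℂ)).mul_const w).const_add b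
    exact ((hd.comp (t : ℂ) hline).comp_ofReal.const_mul (w ^ n)).deriv.trans (by ring)

lemma contDiff_comp_add_ofReal_mul {H : ℂ → ℂ} {b w : ℂ}
    (hH : ∀ t : ℝ, AnalyticAt ℂ H (b + t * w)) : ContDiff ℝ ∞ (fun t : ℝ => H (b + t * w)) :=
  contDiff_iff_contDiffAt.2 fun t => (hH t).contDiffAt.restrict_scalars ℝ |>.comp t
    (contDiffAt_const.add (ofRealCLM.contDiff.contDiffAt.mul contDiffAt_const))

lemma pow_mul_norm_fourierInv_le {g : ℝ → ℂ} {n : ℕ} (hg : ContDiff ℝ n g)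
    (hg' : ∀ k ≤ n, Integrable (iteratedDeriv k g)) (v : ℝ) :
    (2 * Real.pi * |v|) ^ n * ‖𝓕⁻ g v‖ ≤ ∫ t, ‖iteratedDeriv n g t‖ := by
  have h := congrFun (Real.fourier_iteratedDeriv (N := n) (n := n) hg
    (fun k hk => hg' k (by exact_mod_cast hk)) le_rfl) (-v)
  have hpi : ‖(2 * Real.pi * I * (-v : ℝ) : ℂ)‖ = 2 * Real.pi * |v| := by
    simp [abs_of_pos Real.pi_pos]
  rw [Real.fourierInv_eq_fourier_neg, ← hpi, ← norm_pow, ← norm_smul, ← h]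
  exact VectorFourier.norm_fourierIntegral_le_integral_norm _ _ _ _ _

lemma integrable_one_add_sq_rpow {r : ℝ} (hr : r < -1) :
    Integrable fun t : ℝ => (1 + t ^ 2) ^ (r / 2) := by
  have h := integrable_rpow_neg_one_add_norm_sq (E := ℝ) (μ := volume) (r := -r)
    (by rw [Module.finrank_self, Nat.cast_one]; linarith)
  simpa only [neg_neg, Real.norm_eq_abs, sq_abs] using h

namespace HasStripOrder

variable {H : ℂ → ℂ} {n : ℕ} {r : ℝ}

lemma exists_integrable_bound_iteratedDeriv (hH : HasStripOrder n r H) (hr : r < -1)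
    (hA : ∀ s : ℂ, s.re ∈ Set.Icc 1 2 → AnalyticAt ℂ H s) :
    ∃ F : ℕ → ℝ → ℝ, ∀ k ≤ n, Integrable (F k) ∧ ∀ c ∈ Set.Icc (1 : ℝ) 2, ∀ t : ℝ,
      ‖iteratedDeriv k (fun t : ℝ => H (c + t * (2 * Real.pi * I))) t‖ ≤ F k t := by
  obtain ⟨r', hr', hr1⟩ := exists_between hr
  have hdec (k : ℕ) (hk : k ≤ n) := exists_norm_le_of_isBigO_stripEnd (f := iteratedDeriv k H)
    (fun s hs => (analyticAt_iteratedDeriv (hA s hs) k).continuousAt.continuousWithinAt)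
    (hH.2 k hk r' hr')
  choose! C hC using hdec
  refine ⟨fun k t => ‖(2 * Real.pi * I : ℂ) ^ k‖ * (C k * (1 + (2 * Real.pi * t) ^ 2) ^ (r' / 2)),
    fun k hk => ⟨(((integrable_one_add_sq_rpow hr1).comp_mul_left' (by positivity)).const_mul
      _).const_mul _, fun c hc t => ?_⟩⟩
  have hre (t : ℝ) : (c + t * (2 * Real.pi * I) : ℂ).re = c := by simp
  have him : (c + t * (2 * Real.pi * I) : ℂ).im = 2 * Real.pi * t := by simp [mul_comm]
  rw [iteratedDeriv_comp_add_ofReal_mul (fun t => hA _ (by rwa [hre])), norm_mul]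
  have hbound := hC k hk (c + t * (2 * Real.pi * I)) (by rwa [hre])
  rw [him] at hbound
  exact mul_le_mul_of_nonneg_left hbound (norm_nonneg _)

/-- Integrating by parts `n` times along the vertical line. -/
lemma exists_norm_mellinInv_le (hH : HasStripOrder n r H) (hr : r < -1)
    (hA : ∀ s : ℂ, s.re ∈ Set.Icc 1 2 → AnalyticAt ℂ H s) :
    ∃ C, ∀ c ∈ Set.Icc (1 : ℝ) 2, VerticalIntegrable H c ∧
      ∀ x > 0, |Real.log x| ^ n * ‖mellinInv c H x‖ ≤ C * x ^ (-c) := by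
  obtain ⟨F, hF⟩ := hH.exists_integrable_bound_iteratedDeriv hr hA
  refine ⟨∫ t, F n t, fun c hc => ?_⟩
  set g : ℝ → ℂ := fun t => H (c + t * (2 * Real.pi * I))
  have hgC : ContDiff ℝ ∞ g := contDiff_comp_add_ofReal_mul fun t => hA _ (by simpa using hc)
  have hgI (k : ℕ) (hk : k ≤ n) : Integrable (iteratedDeriv k g) :=
    (hF k hk).1.mono' (hgC.continuous_iteratedDeriv k (mod_cast le_top)).aestronglyMeasurable
      (.of_forall ((hF k hk).2 c hc))
  have hgV : VerticalIntegrable H c := by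
    refine ((iteratedDeriv_zero (f := g) ▸ hgI 0 n.zero_le).comp_div Real.two_pi_pos.ne').congr
      (.of_forall fun t => congrArg H ?_)
    push_cast
    field_simp
  refine ⟨hgV, fun x hx => ?_⟩
  have hle : |Real.log x| ^ n ≤ (2 * Real.pi * |-Real.log x|) ^ n := by
    rw [abs_neg]
    gcongr
    exact le_mul_of_one_le_left (abs_nonneg _) (by linarith [Real.pi_gt_three])
  have hbound := (pow_mul_norm_fourierInv_le (hgC.of_le (mod_cast le_top)) hgI
    (-Real.log x)).trans (integral_mono (hgI n le_rfl).norm (hF n le_rfl).1 ((hF n le_rfl).2 c hc))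
  have hline : (fun y : ℝ => H (c + 2 * Real.pi * y * I)) = g :=
    funext fun y => congrArg H (by ring)
  rw [mellinInv_eq_fourierInv c H hx, hline, norm_smul, norm_cpow_eq_rpow_re_of_pos hx,
    ← ofReal_neg, ofReal_re, mul_left_comm, mul_comm (∫ t, F n t)]
  gcongr
  exact (mul_le_mul_of_nonneg_right hle (norm_nonneg _)).trans hbound

end HasStripOrder

end FourierDecay

section Tauberian

variable {f : ℕ → ℂ} {G : ℂ → ℂ} {κ : ℂ} {k : ℕ} {r : ℝ}

lemma HasStripOrder.mul_inv_mul_inv_add_one (hG : HasStripOrder k r G) :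
    HasStripOrder k (r - 2) fun s => G s * (s⁻¹ * (s + 1)⁻¹) := by
  have h₀ := hasStripOrder_inv_sub_const k 0
  have h₁ := hasStripOrder_inv_sub_const k (-1)
  simp only [sub_zero, sub_neg_eq_add] at h₀ h₁
  exact (hG.mul (h₀.mul h₁)).mono (by linarith)

lemma analyticAt_mul_inv_mul_inv_add_one {s : ℂ} (hG : AnalyticAt ℂ G s) (hs : 1 ≤ s.re) :
    AnalyticAt ℂ (fun s => G s * (s⁻¹ * (s + 1)⁻¹)) s := by
  have h₀ : s ≠ 0 := fun h => by norm_num [h] at hs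
  have h₁ : s + 1 ≠ 0 := fun h => by norm_num [eq_neg_of_add_eq_zero_left h] at hs
  fun_prop (disch := assumption)

lemma sum_mul_one_sub_div_eq {c x : ℝ} (hc : 1 < c) (hx : 1 ≤ x) (hf : LSeriesSummable f c)
    (hfG : ∀ s : ℂ, 1 < s.re → LSeries f s = κ * (s - 1)⁻¹ + G s)
    (hG : VerticalIntegrable (fun s => G s * (s⁻¹ * (s + 1)⁻¹)) c) :
    ∑ n ∈ Finset.Ioc 0 ⌊x⌋₊, f n * (1 - n / x) =
      κ * ((x - 1) ^ 2 / (2 * x)) + mellinInv c (fun s => G s * (s⁻¹ * (s + 1)⁻¹)) x⁻¹ := by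
  have hx0 : 0 < x := zero_lt_one.trans_le hx
  have hpole : VerticalIntegrable (fun s => κ * ((s - 1)⁻¹ * (s⁻¹ * (s + 1)⁻¹))) c :=
    (verticalIntegrable_inv_sub_one_mul hc).const_mul κ
  have hline : mellinInv c (fun s => LSeries f s * (s⁻¹ * (s + 1)⁻¹)) x⁻¹ =
      mellinInv c (fun s => κ * ((s - 1)⁻¹ * (s⁻¹ * (s + 1)⁻¹)) + G s * (s⁻¹ * (s + 1)⁻¹)) x⁻¹ := by
    have hre (t : ℝ) : 1 < (c + t * I : ℂ).re := by simpa using hc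
    simp only [mellinInv, hfG _ (hre _), add_mul, mul_assoc]
  rw [← mellinInv_LSeries_mul (zero_lt_one.trans hc) hf hx0, hline,
    mellinInv_add (inv_pos.2 hx0) hpole hG, mellinInv_const_mul,
    mellinInv_inv_sub_one_mul hc (inv_pos.2 hx0),
    max_eq_left (sub_nonneg.2 (inv_le_one_of_one_le₀ hx))]
  rw [show (1 - x⁻¹) ^ 2 / (2 * x⁻¹) = (x - 1) ^ 2 / (2 * x) by field_simp]
  push_cast
  ring

lemma HasStripOrder.isBigO_mellinInv {H : ℂ → ℂ} (hH : HasStripOrder k r H) (hr : r < -1)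
    (hA : ∀ s : ℂ, s.re ∈ Set.Icc 1 2 → AnalyticAt ℂ H s) :
    (fun x : ℝ => mellinInv (1 + (Real.log x)⁻¹) H x⁻¹) =O[atTop] fun x => x / Real.log x ^ k := by
  obtain ⟨C, hC⟩ := hH.exists_norm_mellinInv_le hr hA
  refine .of_bound (C * Real.exp 1) ?_
  filter_upwards [eventually_ge_atTop (Real.exp 1)] with x hx
  have hx0 : 0 < x := (Real.exp_pos 1).trans_le hx
  have hL : 1 ≤ Real.log x := (Real.le_log_iff_exp_le hx0).2 hx
  set c := 1 + (Real.log x)⁻¹ with hc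
  have hc1 : 1 ≤ c := le_add_of_nonneg_right (by positivity)
  have hc2 : c ≤ 2 := by linarith [inv_le_one_of_one_le₀ hL]
  have hxc : x⁻¹ ^ (-c) = Real.exp 1 * x := by
    rw [Real.inv_rpow hx0.le, Real.rpow_neg hx0.le, inv_inv, Real.rpow_def_of_pos hx0, hc, mul_add,
      mul_one, mul_inv_cancel₀ (by positivity), Real.exp_add, Real.exp_log hx0, mul_comm]
  have hbound := (hC c ⟨hc1, hc2⟩).2 x⁻¹ (inv_pos.2 hx0)
  rw [Real.log_inv, abs_neg, abs_of_pos (by linarith), hxc] at hbound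
  rw [Real.norm_of_nonneg (by positivity), mul_div_assoc', le_div_iff₀' (by positivity), mul_assoc]
  exact hbound

lemma isBigO_const_div_log_pow (c : ℂ) (k : ℕ) :
    (fun _ : ℝ => c) =O[atTop] fun x : ℝ => x / Real.log x ^ k := by
  refine .of_bound ‖c‖ ?_
  filter_upwards [(Real.isLittleO_pow_log_id_atTop (n := k)).bound one_pos, eventually_gt_atTop 1]
    with x hx hx1
  have hL := Real.log_pos hx1
  rw [Real.norm_of_nonneg (by positivity), id, Real.norm_of_nonneg (by positivity), one_mul] at hx
  rw [Real.norm_of_nonneg (by positivity)]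
  exact le_mul_of_one_le_right (norm_nonneg c) ((one_le_div (by positivity)).2 hx)

lemma abs_sub_one_sq_div_sub_le {x : ℝ} (hx : 1 ≤ x) :
    |(x - 1) ^ 2 / (2 * x) - x / 2| ≤ 1 := by
  have hx0 : 0 < x := zero_lt_one.trans_le hx
  have h : (x - 1) ^ 2 / (2 * x) - x / 2 = x⁻¹ / 2 - 1 := by field_simp; ring
  rw [h, abs_le]
  constructor <;> linarith [inv_le_one_of_one_le₀ hx, inv_pos.2 hx0]

lemma isBigO_sum_mul_one_sub_div_sub (hf : ∀ c : ℝ, 1 < c → LSeriesSummable f c)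
    (hfG : ∀ s : ℂ, 1 < s.re → LSeries f s = κ * (s - 1)⁻¹ + G s)
    (hG : HasStripOrder k r G) (hr : r < 1)
    (hA : ∀ s : ℂ, s.re ∈ Set.Icc 1 2 → AnalyticAt ℂ G s) :
    (fun x : ℝ => ∑ n ∈ Finset.Ioc 0 ⌊x⌋₊, f n * (1 - n / x) - κ * (x / 2)) =O[atTop]
      fun x => x / Real.log x ^ k := by
  have hH := hG.mul_inv_mul_inv_add_one
  have hHA : ∀ s : ℂ, s.re ∈ Set.Icc 1 2 → AnalyticAt ℂ (fun s => G s * (s⁻¹ * (s + 1)⁻¹)) s :=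
    fun s hs => analyticAt_mul_inv_mul_inv_add_one (hA s hs) hs.1
  obtain ⟨C, hC⟩ := hH.exists_norm_mellinInv_le (by linarith) hHA
  have hpole : (fun x : ℝ => κ * ((x - 1) ^ 2 / (2 * x) - x / 2 : ℝ)) =O[atTop] fun _ => κ := by
    refine .of_bound' ?_
    filter_upwards [eventually_ge_atTop 1] with x hx
    rw [norm_mul, norm_real]
    exact mul_le_of_le_one_right (norm_nonneg κ) (abs_sub_one_sq_div_sub_le hx)
  refine ((hpole.trans (isBigO_const_div_log_pow κ k)).add
    (hH.isBigO_mellinInv (by linarith) hHA)).congr' ?_ .rfl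
  filter_upwards [eventually_ge_atTop (Real.exp 1)] with x hx
  have hL : 1 ≤ Real.log x := (Real.le_log_iff_exp_le ((Real.exp_pos 1).trans_le hx)).2 hx
  have hc1 : 1 < 1 + (Real.log x)⁻¹ := lt_add_of_pos_right _ (by positivity)
  have hc2 : 1 + (Real.log x)⁻¹ ≤ 2 := by linarith [inv_le_one_of_one_le₀ hL]
  rw [sum_mul_one_sub_div_eq hc1 ((Real.one_le_exp zero_le_one).trans hx) (hf _ hc1) hfG
    (hC _ ⟨hc1.le, hc2⟩).1]
  push_cast
  ring

end Tauberian

section Differencing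

variable {f : ℕ → ℝ} {κ : ℝ} {k : ℕ}

/- The left side is the tangent at `x` of the convex function `z ↦ ∑ n ≤ z, f n * (z - n)`. -/
lemma sum_mul_sub_le (hf : ∀ n, 0 ≤ f n) (x : ℝ) {z : ℝ} (hz : 0 ≤ z) :
    (∑ n ∈ Finset.Ioc 0 ⌊x⌋₊, f n) * (z - x) ≤
      ∑ n ∈ Finset.Ioc 0 ⌊z⌋₊, f n * (z - n) - ∑ n ∈ Finset.Ioc 0 ⌊x⌋₊, f n * (x - n) := by
  have hmono : ∑ n ∈ Finset.Ioc 0 ⌊x⌋₊, f n * (z - n) ≤ ∑ n ∈ Finset.Ioc 0 ⌊z⌋₊, f n * (z - n) := by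
    rcases le_total x z with hxz | hzx
    · refine Finset.sum_le_sum_of_subset_of_nonneg
        (Finset.Ioc_subset_Ioc_right (Nat.floor_mono hxz)) fun n hn _ => ?_
      rw [Finset.mem_Ioc, Nat.le_floor_iff hz] at hn
      exact mul_nonneg (hf n) (sub_nonneg.2 hn.2)
    · refine Finset.sum_le_sum_of_subset_of_nonpos'
        (Finset.Ioc_subset_Ioc_right (Nat.floor_mono hzx)) fun n hn hnz => ?_
      rw [Finset.mem_Ioc] at hn
      have hzn : z < n := (Nat.floor_lt hz).1 <| not_le.1 fun h => hnz (Finset.mem_Ioc.2 ⟨hn.1, h⟩)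
      exact mul_nonpos_of_nonneg_of_nonpos (hf n) (sub_nonpos.2 hzn.le)
  rw [le_sub_iff_add_le, Finset.sum_mul, ← Finset.sum_add_distrib]
  refine le_of_eq_of_le (Finset.sum_congr rfl fun n _ => ?_) hmono
  ring

lemma exists_abs_le_of_isBigO_sq_div_log_pow {E : ℝ → ℝ}
    (hE : E =O[atTop] fun x => x ^ 2 / Real.log x ^ k) :
    ∃ C, ∀ᶠ x in atTop, ∀ z ∈ Set.Icc (x / 2) (2 * x),
      |E z| ≤ C * (x ^ 2 / Real.log x ^ k) := by
  obtain ⟨C, hC, hE⟩ := hE.exists_pos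
  obtain ⟨x₀, hx₀⟩ := eventually_atTop.1 hE.bound
  refine ⟨C * (4 * 2 ^ k), ?_⟩
  filter_upwards [eventually_ge_atTop (2 * x₀), eventually_ge_atTop 4] with x hx hx4 z hz
  have hx1 : 0 < Real.log x := Real.log_pos (by linarith)
  have hlog : Real.log x / 2 ≤ Real.log z := by
    rw [div_le_iff₀ two_pos, mul_comm, ← Nat.cast_ofNat, ← Real.log_pow]
    exact Real.log_le_log (by linarith) (by nlinarith [hz.1])
  have hz0 : 0 < z := by linarith [hz.1]
  have hz1 := (half_pos hx1).trans_le hlog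
  calc |E z| ≤ C * (z ^ 2 / Real.log z ^ k) := by
        simpa [abs_of_pos hz1] using hx₀ z (by linarith [hz.1])
    _ ≤ C * ((2 * x) ^ 2 / (Real.log x / 2) ^ k) := by
        gcongr
        exact hz.2
    _ = C * (4 * 2 ^ k) * (x ^ 2 / Real.log x ^ k) := by
        rw [div_pow]
        field_simp
        ring

lemma abs_sum_sub_mul_le (hf : ∀ n, 0 ≤ f n) {x η B : ℝ} (hx : 0 ≤ x) (hη : 0 ≤ η) (hη' : η ≤ 1 / 2)
    (hB : ∀ z ∈ Set.Icc (x / 2) (2 * x),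
      |∑ n ∈ Finset.Ioc 0 ⌊z⌋₊, f n * (z - n) - κ * (z ^ 2 / 2)| ≤ B) :
    |∑ n ∈ Finset.Ioc 0 ⌊x⌋₊, f n - κ * x| * (η * x) ≤ |κ| / 2 * (η * x) ^ 2 + 2 * B := by
  have htangent {θ : ℝ} (hθ : |θ| = η) : (∑ n ∈ Finset.Ioc 0 ⌊x⌋₊, f n - κ * x) * (θ * x) ≤
      |κ| / 2 * (η * x) ^ 2 + 2 * B := by
    have hθη := abs_le.1 hθ.le
    have hz : x + θ * x ∈ Set.Icc (x / 2) (2 * x) := ⟨by nlinarith, by nlinarith⟩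
    have hconvex := sum_mul_sub_le hf x (z := x + θ * x) (by linarith [hz.1])
    have hWz := (abs_le.1 (hB _ hz)).2
    have hWx := (abs_le.1 (hB x ⟨by linarith, by linarith⟩)).1
    have hκ : κ * (θ * x) ^ 2 ≤ |κ| * (η * x) ^ 2 := by
      rw [mul_pow, ← sq_abs θ, hθ, ← mul_pow]
      exact mul_le_mul_of_nonneg_right (le_abs_self κ) (sq_nonneg _)
    linarith
  rcases abs_choice (∑ n ∈ Finset.Ioc 0 ⌊x⌋₊, f n - κ * x) with h | h <;> rw [h]
  · exact htangent (abs_of_nonneg hη)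
  · linarith [htangent (θ := -η) (by rw [abs_neg, abs_of_nonneg hη])]

lemma isBigO_sum_sub_of_isBigO_sum_mul_one_sub_div_sub (hf : ∀ n, 0 ≤ f n)
    (h : (fun x : ℝ => ∑ n ∈ Finset.Ioc 0 ⌊x⌋₊, f n * (1 - n / x) - κ * (x / 2)) =O[atTop]
      fun x => x / Real.log x ^ (2 * k)) :
    (fun x : ℝ => ∑ n ∈ Finset.Ioc 0 ⌊x⌋₊, f n - κ * x) =O[atTop]
      fun x => x / Real.log x ^ k := by
  have hW : (fun x : ℝ => ∑ n ∈ Finset.Ioc 0 ⌊x⌋₊, f n * (x - n) - κ * (x ^ 2 / 2)) =O[atTop]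
      fun x => x ^ 2 / Real.log x ^ (2 * k) := by
    refine ((isBigO_refl (fun x : ℝ => x) atTop).mul h).congr' ?_ (.of_forall fun x => by ring)
    filter_upwards [eventually_ne_atTop 0] with x hx
    rw [mul_sub, Finset.mul_sum]
    congr 1
    · exact Finset.sum_congr rfl fun n _ => by field_simp
    · ring
  obtain ⟨C, hbound⟩ := exists_abs_le_of_isBigO_sq_div_log_pow hW
  refine .of_bound (|κ| + 4 * C) ?_
  filter_upwards [hbound, eventually_ge_atTop (Real.exp 1)] with x hx hxe
  have hx0 : 0 < x := (Real.exp_pos 1).trans_le hxe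
  have hL : 1 ≤ Real.log x := (Real.le_log_iff_exp_le hx0).2 hxe
  set η := (2 * Real.log x ^ k)⁻¹ with hη
  have hη0 : 0 < η := by positivity
  have hη1 : η ≤ 1 / 2 := by
    rw [hη, mul_inv, one_div]
    exact mul_le_of_le_one_right (by norm_num) (inv_le_one_of_one_le₀ (one_le_pow₀ hL))
  have hsq : x ^ 2 / Real.log x ^ (2 * k) = 4 * (η * x) ^ 2 := by
    rw [hη, mul_comm 2 k, pow_mul]
    field_simp
    norm_num
  have hlin : x / Real.log x ^ k = 2 * (η * x) := by rw [hη]; field_simp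
  rw [Real.norm_eq_abs, hlin, Real.norm_of_nonneg (by positivity)]
  refine le_of_mul_le_mul_right ?_ (mul_pos hη0 hx0)
  rw [hsq] at hx
  have := mul_nonneg (abs_nonneg κ) (sq_nonneg (η * x))
  linarith [abs_sum_sub_mul_le hf hx0.le hη0.le hη1 hx]

end Differencing

section ResidueClass

open ArithmeticFunction ArithmeticFunction.vonMangoldt

variable {q : ℕ}

lemma isBigO_sum_residueClass_sub [NeZero q] {c : ZMod q} (hc : IsUnit c) (k : ℕ) :
    (fun x : ℝ => ∑ n ∈ Finset.Ioc 0 ⌊x⌋₊, residueClass c n - (q.totient : ℝ)⁻¹ * x) =O[atTop]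
      fun x => x / Real.log x ^ k := by
  refine isBigO_sum_sub_of_isBigO_sum_mul_one_sub_div_sub (residueClass_nonneg c) ?_
  have hsummable (σ : ℝ) (hσ : 1 < σ) : LSeriesSummable (fun n => (residueClass c n : ℂ)) σ :=
    LSeriesSummable_of_abscissaOfAbsConv_lt_re <|
      (abscissaOfAbsConv_residueClass_le_one c).trans_lt (mod_cast hσ)
  have hpole (s : ℂ) (hs : 1 < s.re) : LSeries (fun n => (residueClass c n : ℂ)) s =
      (q.totient : ℂ)⁻¹ * (s - 1)⁻¹ + LFunctionResidueClassAux c s := by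
    rw [← div_eq_mul_inv, ← sub_eq_iff_eq_add']
    exact (eqOn_LFunctionResidueClassAux hc hs).symm
  have h := isBigO_sum_mul_one_sub_div_sub hsummable hpole
    (hasStripOrder_LFunctionResidueClassAux c (2 * k)) one_pos
    fun s hs => analyticAt_LFunctionResidueClassAux c hs.1
  refine (isBigO_norm_left.2 h).congr_left (fun x => ?_) |>.of_norm_left
  rw [← norm_real]
  push_cast
  rfl

/-- The primes below `N` in the residue class `c` modulo `q`. -/
def primesBelowMod (c : ZMod q) (N : ℕ) : Finset ℕ := {p ∈ N.primesBelow | (p : ZMod q) = c}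

lemma mem_primesBelowMod {c : ZMod q} {N p : ℕ} :
    p ∈ primesBelowMod c N ↔ p < N ∧ p.Prime ∧ (p : ZMod q) = c := by
  simp [primesBelowMod, Nat.mem_primesBelow, and_assoc]

lemma sum_prime_residueClass_le (c : ZMod q) (N : ℕ) :
    ∑ p ∈ Finset.Ioc 0 N with p.Prime, residueClass c p ≤
      (primesBelowMod c N).card * Real.log N + Real.log N := by
  set P : Finset ℕ := {p ∈ Finset.Ioc 0 N | p.Prime ∧ (p : ZMod q) = c} with hP
  have hcard : (P.card : ℝ) ≤ (primesBelowMod c N).card + 1 := by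
    have hsub : P ⊆ insert N (primesBelowMod c N) := fun p hp => by
      simp only [hP, Finset.mem_filter, Finset.mem_Ioc] at hp
      rw [Finset.mem_insert, mem_primesBelowMod]
      exact hp.1.2.eq_or_lt.imp_right fun h => ⟨h, hp.2⟩
    exact_mod_cast (Finset.card_le_card hsub).trans (Finset.card_insert_le _ _)
  calc ∑ p ∈ Finset.Ioc 0 N with p.Prime, residueClass c p
    _ = ∑ p ∈ P, vonMangoldt p := by
      simp only [residueClass, Set.indicator_apply, Set.mem_ofPred_eq, hP,
        ← Finset.filter_filter, Finset.sum_filter]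
    _ ≤ P.card • Real.log N := by
      refine Finset.sum_le_card_nsmul _ _ _ fun p hp => vonMangoldt_le_log.trans ?_
      simp only [hP, Finset.mem_filter, Finset.mem_Ioc] at hp
      exact Real.log_le_log (mod_cast hp.1.1) (mod_cast hp.1.2)
    _ ≤ ((primesBelowMod c N).card + 1) * Real.log N := by
      rw [nsmul_eq_mul]
      gcongr
    _ = _ := by ring

lemma sum_residueClass_le (c : ZMod q) {N : ℕ} (hN : 1 ≤ N) :
    ∑ n ∈ Finset.Ioc 0 N, residueClass c n ≤
      (primesBelowMod c N).card * Real.log N + Real.log N + 2 * √N * Real.log N := by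
  rw [← Finset.sum_filter_add_sum_filter_not _ Nat.Prime]
  refine add_le_add (sum_prime_residueClass_le c N)
    ((Finset.sum_le_sum fun n _ => residueClass_le c n).trans ?_)
  have h := Chebyshev.psi_sub_theta_le (x := N) (mod_cast hN)
  rwa [Chebyshev.psi_sub_theta_eq_sum_not_prime, Nat.floor_natCast] at h

lemma isLittleO_div_log_sq_div_log :
    (fun x : ℝ => x / Real.log x ^ 2) =o[atTop] fun x => x / Real.log x := by
  have hinv : (fun x => (Real.log x)⁻¹) =o[atTop] fun _ => (1 : ℝ) :=
    (isLittleO_one_iff ℝ).2 Real.tendsto_log_atTop.inv_tendsto_atTop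
  refine ((isBigO_refl (fun x : ℝ => x / Real.log x) atTop).mul_isLittleO hinv).congr
    (fun x => ?_) fun x => mul_one _
  rw [← div_eq_mul_inv, div_div, sq]

lemma isLittleO_sqrt_mul_log_div_log :
    (fun x : ℝ => √x * Real.log x) =o[atTop] fun x => x / Real.log x := by
  have hlog : (fun x => Real.log x ^ (2 : ℝ)) =o[atTop] fun x => √x := by
    simpa only [Real.sqrt_eq_rpow] using isLittleO_log_rpow_rpow_atTop 2 one_half_pos
  refine (((isBigO_refl (fun x => √x / Real.log x) atTop)).mul_isLittleO hlog).congr' ?_ ?_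
  · filter_upwards [Real.tendsto_log_atTop.eventually_ne_atTop 0] with x hx
    rw [Real.rpow_two]
    field_simp
  · filter_upwards [eventually_ge_atTop 0] with x hx
    rw [div_mul_eq_mul_div, Real.mul_self_sqrt hx]

lemma eventually_le_card_primesBelowMod [NeZero q] {c : ZMod q} (hc : IsUnit c) {ε : ℝ}
    (hε : 0 < ε) : ∀ᶠ N : ℕ in atTop,
      N / q.totient / Real.log N - ε * N / Real.log N ^ 2 ≤ (primesBelowMod c N).card := by
  have hε4 : 0 < ε / 4 := by positivity
  have hψ := ((isBigO_sum_residueClass_sub hc 2).trans_isLittleO isLittleO_div_log_sq_div_log).bound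
    hε4
  filter_upwards [tendsto_natCast_atTop_atTop.eventually hψ,
    tendsto_natCast_atTop_atTop.eventually (isLittleO_sqrt_mul_log_div_log.bound hε4),
    eventually_ge_atTop 2] with N hψN hsqrt hN
  have hL : 0 < Real.log N := Real.log_pos (by exact_mod_cast hN)
  have hN1 : 1 ≤ √(N : ℝ) := Real.one_le_sqrt.2 (by exact_mod_cast one_le_two.trans hN)
  rw [Nat.floor_natCast, Real.norm_of_nonneg (by positivity : 0 ≤ N / Real.log N)] at hψN
  rw [Real.norm_of_nonneg (by positivity), Real.norm_of_nonneg (by positivity)] at hsqrt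
  have hcount := sum_residueClass_le c (one_le_two.trans hN)
  have hle : (N / q.totient / Real.log N - ε * N / Real.log N ^ 2) * Real.log N ≤
      (primesBelowMod c N).card * Real.log N := by
    calc (N / q.totient / Real.log N - ε * N / Real.log N ^ 2) * Real.log N
      _ = (q.totient : ℝ)⁻¹ * N - 4 * (ε / 4 * (N / Real.log N)) := by field_simp
      _ ≤ _ := by
        linarith [(abs_le.1 hψN).1, le_mul_of_one_le_left hL.le hN1]
  exact le_of_mul_le_mul_right hle hL

end ResidueClass

section Semigroup

variable {a b : ℕ}

lemma mul_le_of_modEq {u v w : ℕ} (hab : a.Coprime b) (hv : v < a)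
    (h : a * u + b * w ≡ b * v [MOD a]) : b * v ≤ a * u + b * w := by
  have hmod : w ≡ v [MOD a] := Nat.ModEq.cancel_left_of_coprime hab <|
    (Nat.ModEq.symm (by simp [Nat.ModEq])).trans h
  have hvw : v ≤ w := by
    rw [← Nat.mod_eq_of_lt hv, ← hmod]
    exact Nat.mod_le w a
  exact (Nat.mul_le_mul_left b hvw).trans (Nat.le_add_left _ _)

lemma exists_eq_mul_add_mul {n : ℕ} (hab : a.Coprime b) (hn : a * b ≤ n) :
    ∃ u v : ℕ, n = a * u + b * v := by
  obtain ⟨u, v, h⟩ := Nat.exists_add_mul_eq_of_gcd_dvd_of_mul_pred_le a b n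
    (by rw [hab.gcd_eq_one]; exact one_dvd n) (le_trans (by gcongr <;> exact Nat.pred_le _) hn)
  exact ⟨u, v, by rw [← h]; ring⟩

lemma finite_setOf_prime_not_exists (hab : a.Coprime b) :
    {p : ℕ | p.Prime ∧ ¬ ∃ u v : ℕ, p = a * u + b * v}.Finite :=
  (Set.finite_lt_nat (a * b)).subset fun _ hp =>
    not_le.1 fun h => hp.2 (exists_eq_mul_add_mul hab h)

lemma not_exists_of_mem_primesBelowMod {v p : ℕ} (hab : a.Coprime b) (hv : v < a)
    (hp : p ∈ primesBelowMod ((b * v : ℕ) : ZMod a) (b * v)) :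
    ¬ ∃ u w : ℕ, p = a * u + b * w := by
  rw [mem_primesBelowMod, ZMod.natCast_eq_natCast_iff] at hp
  rintro ⟨u, w, rfl⟩
  exact hp.1.not_ge (mul_le_of_modEq hab hv hp.2.2)

lemma sum_card_primesBelowMod_le_piStar (hab : a.Coprime b) :
    ∑ v ∈ Finset.range a, (primesBelowMod ((b * v : ℕ) : ZMod a) (b * v)).card ≤ piStar a b := by
  rw [← Finset.card_biUnion, piStar, ← Set.ncard_coe_finset]
  · refine Set.ncard_le_ncard (fun p hp => ?_) (finite_setOf_prime_not_exists hab)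
    obtain ⟨v, hv, hp⟩ := Finset.mem_biUnion.1 hp
    exact ⟨(mem_primesBelowMod.1 hp).2.1,
      not_exists_of_mem_primesBelowMod hab (Finset.mem_range.1 hv) hp⟩
  · refine fun v hv w hw hvw => Finset.disjoint_left.2 fun p hpv hpw => hvw ?_
    have h := (mem_primesBelowMod.1 hpv).2.2.symm.trans (mem_primesBelowMod.1 hpw).2.2
    rw [ZMod.natCast_eq_natCast_iff] at h
    exact (h.cancel_left_of_coprime hab).eq_of_lt_of_lt (Finset.mem_range.1 hv)
      (Finset.mem_range.1 hw)

/-- The representatives in `[0, a)` of the invertible residue classes modulo `a`. -/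
def reducedResidues (a : ℕ) : Finset ℕ := {v ∈ Finset.range a | a.Coprime v}

lemma mem_reducedResidues {v : ℕ} : v ∈ reducedResidues a ↔ v < a ∧ a.Coprime v := by
  rw [reducedResidues, Finset.mem_filter, Finset.mem_range]

lemma card_reducedResidues (a : ℕ) : (reducedResidues a).card = a.totient := rfl

lemma pos_of_mem_reducedResidues {v : ℕ} (ha : a ≠ 1) (hv : v ∈ reducedResidues a) : 0 < v :=
  Nat.pos_of_ne_zero fun h =>
    ha (by simpa only [h, Nat.coprime_zero_right] using (mem_reducedResidues.1 hv).2)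

lemma sum_reducedResidues (ha : a ≠ 1) :
    ∑ v ∈ reducedResidues a, (v : ℝ) = a * a.totient / 2 := by
  have hreflect : ∑ v ∈ reducedResidues a, (v : ℝ) = ∑ v ∈ reducedResidues a, ((a : ℝ) - v) := by
    have hmem : ∀ v ∈ reducedResidues a, a - v ∈ reducedResidues a := fun v hv => by
      have hpos := pos_of_mem_reducedResidues ha hv
      rw [mem_reducedResidues] at hv ⊢
      exact ⟨by omega, (Nat.coprime_self_sub_right hv.1.le).2 hv.2⟩
    have hlt : ∀ v ∈ reducedResidues a, v < a := fun v hv => (mem_reducedResidues.1 hv).1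
    refine Finset.sum_nbij' (a - ·) (a - ·) hmem hmem (fun v hv => ?_) (fun v hv => ?_)
      fun v hv => ?_
    · exact Nat.sub_sub_self (hlt v hv).le
    · exact Nat.sub_sub_self (hlt v hv).le
    · rw [Nat.cast_sub (hlt v hv).le, sub_sub_cancel]
  rw [Finset.sum_sub_distrib, Finset.sum_const, card_reducedResidues, nsmul_eq_mul] at hreflect
  linarith

end Semigroup

section LowerBound

variable {a : ℕ}

lemma cast_S {b : ℕ} (hab : a + b ≤ a * b) : (S a b : ℝ) = a * b - a - b := by
  rw [S, Nat.sub_sub, Nat.cast_sub hab]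
  push_cast
  ring

lemma S_div_log_S_le {b : ℕ} (ha : 3 ≤ a) (hb : 3 ≤ b) :
    (S a b : ℝ) / Real.log (S a b) ≤ (a - 1) * b / Real.log ((a - 1) * b) := by
  have ha' : (3 : ℝ) ≤ a := mod_cast ha
  have hb' : (3 : ℝ) ≤ b := mod_cast hb
  rw [cast_S (by nlinarith)]
  have he := Real.exp_one_lt_three
  have hS : (3 : ℝ) ≤ a * b - a - b := by nlinarith
  have hle : (a * b - a - b : ℝ) ≤ (a - 1) * b := by linarith
  have hlog {x : ℝ} (hx : 3 ≤ x) : 0 < Real.log x / x :=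
    div_pos (Real.log_pos (by linarith)) (by linarith)
  have hanti := Real.log_div_self_antitoneOn (Set.mem_Ici.2 (he.le.trans hS))
    (Set.mem_Ici.2 (he.le.trans (hS.trans hle))) hle
  simpa only [inv_div] using inv_anti₀ (hlog (hS.trans hle)) hanti

lemma sum_mul_reducedResidues (ha : a ≠ 1) (b : ℝ) :
    ∑ v ∈ reducedResidues a, b * v = a.totient * (a * b / 2) := by
  rw [← Finset.mul_sum, sum_reducedResidues ha]
  ring

lemma cast_mem_Icc_of_mem_reducedResidues {v : ℕ} (ha : a ≠ 1) (hv : v ∈ reducedResidues a) :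
    (v : ℝ) ∈ Set.Icc 1 ((a : ℝ) - 1) := by
  refine ⟨mod_cast pos_of_mem_reducedResidues ha hv, le_sub_iff_add_le.2 ?_⟩
  exact_mod_cast (mem_reducedResidues.1 hv).1

lemma one_mem_reducedResidues (ha : 1 < a) : 1 ∈ reducedResidues a :=
  mem_reducedResidues.2 ⟨ha, Nat.coprime_one_right a⟩

/- Only the class `v = 1` has its logarithm bounded better than by `log ((a - 1) * b)`; this gains a
term of order `b / log b ^ 2`, which absorbs the error of the prime number theorem. -/
lemma le_sum_mul_div_log {b : ℝ} (ha : 1 < a) (hb : 1 < b) :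
    a * b / 2 / Real.log ((a - 1) * b) +
        b / a.totient * (1 / Real.log b - 1 / Real.log ((a - 1) * b)) ≤
      ∑ v ∈ reducedResidues a, b * v / a.totient / Real.log (b * v) := by
  have hφ : (a.totient : ℝ) ≠ 0 := by
    exact_mod_cast (Nat.totient_pos.2 (zero_lt_one.trans ha)).ne'
  set M := Real.log ((a - 1) * b)
  have hsum : ∑ v ∈ reducedResidues a, b * v / a.totient / M = a * b / 2 / M := by
    rw [← Finset.sum_div, ← Finset.sum_div, sum_mul_reducedResidues ha.ne',
      mul_div_cancel_left₀ _ hφ]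
  have hgain : b * (1 : ℕ) / a.totient / Real.log (b * (1 : ℕ)) - b * (1 : ℕ) / a.totient / M ≤
      ∑ v ∈ reducedResidues a, (b * v / a.totient / Real.log (b * v) - b * v / a.totient / M) := by
    refine Finset.single_le_sum
      (f := fun v : ℕ => b * v / a.totient / Real.log (b * v) - b * v / a.totient / M)
      (fun v hv => sub_nonneg.2 ?_) (one_mem_reducedResidues ha)
    have hv' := cast_mem_Icc_of_mem_reducedResidues ha.ne' hv
    have hlog : 0 < Real.log (b * v) := Real.log_pos (by nlinarith [hv'.1])
    have hle : Real.log (b * v) ≤ M := Real.log_le_log (by nlinarith [hv'.1]) (by nlinarith [hv'.2])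
    gcongr
  rw [Finset.sum_sub_distrib, hsum, Nat.cast_one, mul_one] at hgain
  calc _ = b / a.totient / Real.log b - b / a.totient / M + a * b / 2 / M := by ring
    _ ≤ _ := by linarith

lemma sum_mul_div_log_sq_le {b ε : ℝ} (ha : a ≠ 1) (hb : 1 < b) (hε : 0 ≤ ε) :
    ∑ v ∈ reducedResidues a, ε * (b * v) / Real.log (b * v) ^ 2 ≤
      ε * (a.totient * (a * b / 2)) / Real.log b ^ 2 := by
  rw [← sum_mul_reducedResidues ha, Finset.mul_sum, Finset.sum_div]
  refine Finset.sum_le_sum fun v hv => ?_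
  have hv' := (cast_mem_Icc_of_mem_reducedResidues ha hv).1
  have hlog : 0 < Real.log b := Real.log_pos hb
  have hle : b ≤ b * v := le_mul_of_one_le_right (by positivity) hv'
  gcongr

lemma mul_div_log_sq_lt {b : ℝ} (ha : 3 ≤ a) (hb : a ≤ b) :
    Real.log (a - 1) / (2 * a * a.totient ^ 2) * (a.totient * (a * b / 2)) / Real.log b ^ 2 <
      b / a.totient * (1 / Real.log b - 1 / Real.log ((a - 1) * b)) := by
  have ha' : (3 : ℝ) ≤ a := mod_cast ha
  have : (0 : ℝ) < a.totient := mod_cast Nat.totient_pos.2 (by omega)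
  have hb0 : 0 < b := by linarith
  have hℓ : 0 < Real.log (a - 1) := Real.log_pos (by linarith)
  have hle : Real.log (a - 1) ≤ Real.log b := Real.log_le_log (by linarith) (by linarith)
  rw [Real.log_mul (by linarith) hb0.ne']
  set ℓ := Real.log (a - 1)
  set L := Real.log b
  have hL : 0 < L := hℓ.trans_le hle
  calc ℓ / (2 * a * a.totient ^ 2) * (a.totient * (a * b / 2)) / L ^ 2
    _ = b / a.totient * (ℓ / (L * (4 * L))) := by field_simp; norm_num
    _ < b / a.totient * (ℓ / (L * (ℓ + L))) := by gcongr; linarith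
    _ = b / a.totient * (1 / L - 1 / (ℓ + L)) := by field_simp; ring

lemma eventually_le_card_primesBelowMod_mul [NeZero a] (ha : a ≠ 1) {ε : ℝ} (hε : 0 < ε) :
    ∀ᶠ b : ℕ in atTop, a.Coprime b → ∀ v ∈ reducedResidues a,
      (b * v : ℝ) / a.totient / Real.log (b * v) - ε * (b * v) / Real.log (b * v) ^ 2 ≤
        (primesBelowMod ((b * v : ℕ) : ZMod a) (b * v)).card := by
  have hunif := eventually_all.2 fun c : (ZMod a)ˣ =>
    eventually_le_card_primesBelowMod (c := (c : ZMod a)) c.isUnit hε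
  filter_upwards [eventually_forall_ge_atTop.2 hunif] with b hb hab v hv
  have hcop : (b * v).Coprime a := (hab.mul_right (mem_reducedResidues.1 hv).2).symm
  simpa using hb (b * v) (Nat.le_mul_of_pos_right b (pos_of_mem_reducedResidues ha hv))
    (ZMod.unitOfCoprime (b * v) hcop)

lemma eventually_lt_piStar (ha : 3 ≤ a) :
    ∀ᶠ b : ℕ in atTop, a.Coprime b → (a * b : ℝ) / 2 / Real.log ((a - 1) * b) < piStar a b := by
  have : NeZero a := ⟨by omega⟩
  have ha1 : a ≠ 1 := by omega
  have ha' : (3 : ℝ) ≤ a := mod_cast ha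
  have : (0 : ℝ) < a.totient := mod_cast Nat.totient_pos.2 (by omega)
  have hℓ : 0 < Real.log (a - 1) := Real.log_pos (by linarith)
  have hε : 0 < Real.log (a - 1) / (2 * a * a.totient ^ 2) := by positivity
  filter_upwards [eventually_le_card_primesBelowMod_mul ha1 hε, eventually_ge_atTop a]
    with b hcard hb hab
  have hb' : (a : ℝ) ≤ b := mod_cast hb
  have hsum := Finset.sum_le_sum (hcard hab)
  rw [Finset.sum_sub_distrib] at hsum
  have hsub : ∑ v ∈ reducedResidues a, (primesBelowMod ((b * v : ℕ) : ZMod a) (b * v)).card ≤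
      piStar a b :=
    (Finset.sum_le_sum_of_subset (Finset.filter_subset _ _)).trans
      (sum_card_primesBelowMod_le_piStar hab)
  have hsub' : ∑ v ∈ reducedResidues a,
      ((primesBelowMod ((b * v : ℕ) : ZMod a) (b * v)).card : ℝ) ≤ piStar a b := mod_cast hsub
  have hmain := le_sum_mul_div_log (a := a) (b := b) (by omega) (by linarith)
  have herr := sum_mul_div_log_sq_le (a := a) (b := b) ha1 (by linarith) hε.le
  linarith [mul_div_log_sq_lt ha hb']

end LowerBound

theorem number_of_primes_not_in_semigroup_lower_bound :
    ∀ a : ℕ, 3 ≤ a → ∃ C : ℕ, ∀ b : ℕ, C ≤ b → Nat.Coprime a b →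
      ((1 : ℝ) / 2 + 1 / (2 * ((a : ℝ) - 1))) * (S a b : ℝ) / Real.log (S a b)
        < (piStar a b : ℝ) := by
  intro a ha
  obtain ⟨C, hC⟩ := eventually_atTop.1
    ((eventually_lt_piStar ha).and (eventually_ge_atTop 3))
  refine ⟨C, fun b hb hab => ?_⟩
  obtain ⟨hlt, hb3⟩ := hC b hb
  have ha1 : (0 : ℝ) < a - 1 := sub_pos.2 (mod_cast (by omega : 1 < a))
  have hcoeff : (1 : ℝ) / 2 + 1 / (2 * (a - 1)) = a / (2 * (a - 1)) := by
    field_simp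
    ring
  rw [hcoeff, mul_div_assoc]
  calc (a : ℝ) / (2 * (a - 1)) * (S a b / Real.log (S a b))
    _ ≤ a / (2 * (a - 1)) * ((a - 1) * b / Real.log ((a - 1) * b)) := by
      gcongr ?_ * ?_
      exact S_div_log_S_le ha hb3
    _ = a * b / 2 / Real.log ((a - 1) * b) := by field_simp
    _ < piStar a b := hlt hab
end

section
/- For every integer a ≥ 3 and every real ε > 0 there exists B such that for every integer b ≥ B with gcd(a,b) = 1, the number π*(a,b) of primes not representable as au + bv with u, v nonnegative integers satisfies π*(a,b) ≤ (1/2 + 1/(2(a−1)) + ε) · S(a,b)/log S(a,b); in other words, the factor 1/2 + 1/(2(a−1)) in the lower bound π*(a,b) > (1/2 + 1/(2(a−1)))·S(a,b)/log S(a,b) is best possible. -/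
/-! A Wiener–Ikehara argument bounds the primes in arithmetic progressions from above. Smoothing the
coefficients of `∑ Λ(n) n⁻ˢ`, over a reduced residue class mod `q`, by a band-limited (Fejér) kernel
involves only a bounded piece of the line `Re s = 1`. There the series minus its pole is continuous,
so by Riemann–Lebesgue only the pole survives, and at most `(1/φ(q) + o(1)) X / log X` primes below
`X` lie in the class.

A prime `p ∤ a` is congruent mod `a` to `b v` for some `v < a` coprime to `a`, and can only fail to
be representable if `p < b v`. Since these `v` sum to `a φ(a) / 2`, at most
`(a/2 + o(1)) b / log b` primes are not representable. As `S(a,b) / log S(a,b) ~ (a - 1) b / log b`,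
the constant is `a / (2(a - 1)) = 1/2 + 1/(2(a - 1))`. -/

open Filter Topology MeasureTheory Asymptotics
open Complex (I)

/-- The finite Fourier integral of `H` over the band `[-T, T]`, evaluated at `y`. Smoothed sums of a
Dirichlet series are of this form. The sign of the phase and the missing factor `2π` are chosen so
that twisting by `n ^ (-it)` translates `y` by `log n`. -/
noncomputable def bandIntegral (T : ℝ) (H : ℝ → ℂ) (y : ℝ) : ℂ :=
  ∫ t in (-T)..T, H t * Complex.exp (t * y * I)

section BandIntegral

variable {T : ℝ} {H H' : ℝ → ℂ}

lemma continuous_bandIntegral (hH : Continuous H) : Continuous (bandIntegral T H) :=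
  intervalIntegral.continuous_parametric_intervalIntegral_of_continuous'
    (by unfold Function.uncurry; fun_prop) _ _

lemma bandIntegral_add (hH : Continuous H) (hH' : Continuous H') (y : ℝ) :
    bandIntegral T (fun t ↦ H t + H' t) y = bandIntegral T H y + bandIntegral T H' y := by
  simp only [bandIntegral, add_mul]
  exact intervalIntegral.integral_add (Continuous.intervalIntegrable (by fun_prop) _ _)
    (Continuous.intervalIntegrable (by fun_prop) _ _)

lemma bandIntegral_const_mul (c : ℂ) (y : ℝ) :
    bandIntegral T (fun t ↦ c * H t) y = c * bandIntegral T H y := by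
  simp only [bandIntegral, mul_assoc, intervalIntegral.integral_const_mul]

lemma bandIntegral_comp_div (hT : T ≠ 0) (R y : ℝ) :
    bandIntegral (T * R) (fun t ↦ H (t / T)) y = T * bandIntegral R H (T * y) := by
  have hTC : (T : ℂ) ≠ 0 := mod_cast hT
  have key := intervalIntegral.integral_comp_div (a := -(T * R)) (b := T * R)
    (fun t : ℝ ↦ H t * Complex.exp (t * (T * y : ℝ) * I)) hT
  rw [← mul_neg, mul_div_cancel_left₀ _ hT, mul_div_cancel_left₀ _ hT, Complex.real_smul,
    mul_neg] at key
  rw [bandIntegral, bandIntegral, ← key]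
  refine intervalIntegral.integral_congr fun t _ ↦ ?_
  push_cast
  field_simp

lemma bandIntegral_ofReal_of_even {h : ℝ → ℝ} (hc : Continuous h) (he : ∀ t, h (-t) = h t)
    (y : ℝ) :
    bandIntegral T (fun t ↦ (h t : ℂ)) y = (∫ t in 0..T, 2 * h t * Real.cos (t * y) : ℝ) := by
  have hcont : Continuous fun t : ℝ ↦ (h t : ℂ) * Complex.exp (t * y * I) := by fun_prop
  have hcont' : Continuous fun t : ℝ ↦ (h (-t) : ℂ) * Complex.exp ((-t : ℝ) * y * I) :=
    hcont.comp continuous_neg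
  have hneg := intervalIntegral.integral_comp_neg (a := 0) (b := T)
    (fun t : ℝ ↦ (h t : ℂ) * Complex.exp (t * y * I))
  rw [neg_zero] at hneg
  rw [bandIntegral, ← intervalIntegral.integral_add_adjacent_intervals (b := 0)
    (hcont.intervalIntegrable _ _) (hcont.intervalIntegrable _ _), ← hneg,
    ← intervalIntegral.integral_add (hcont'.intervalIntegrable _ _)
      (hcont.intervalIntegrable _ _), ← intervalIntegral.integral_ofReal]
  refine intervalIntegral.integral_congr fun t _ ↦ ?_
  simp only [he]
  push_cast
  rw [Complex.cos]
  ring_nf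

lemma norm_bandIntegral_le (hT : 0 ≤ T) (y : ℝ) :
    ‖bandIntegral T H y‖ ≤ ∫ t in (-T)..T, ‖H t‖ := by
  refine (intervalIntegral.norm_integral_le_integral_norm (by linarith)).trans_eq ?_
  refine intervalIntegral.integral_congr fun t _ ↦ ?_
  simp [Complex.norm_exp]

lemma tendsto_bandIntegral_atTop (hT : 0 ≤ T) : Tendsto (bandIntegral T H) atTop (𝓝 0) := by
  have hfreq : Tendsto (fun y : ℝ ↦ -(y / (2 * Real.pi))) atTop (cocompact ℝ) :=
    (tendsto_neg_atTop_atBot.comp (tendsto_id.atTop_div_const (by positivity))).mono_right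
      atBot_le_cocompact
  refine ((Real.tendsto_integral_exp_smul_cocompact
    ((Set.Ioc (-T) T).indicator H)).comp hfreq).congr fun y ↦ ?_
  rw [bandIntegral, intervalIntegral.integral_of_le (by linarith),
    ← integral_indicator measurableSet_Ioc]
  refine integral_congr_ae (.of_forall fun t ↦ ?_)
  have hphase : ((2 * Real.pi * -(t * -(y / (2 * Real.pi))) : ℝ) : ℂ) = t * y := by
    push_cast
    field_simp [Complex.ofReal_ne_zero.mpr Real.pi_ne_zero]
  by_cases ht : t ∈ Set.Ioc (-T) T
  · simp only [Set.indicator_of_mem ht, Circle.smul_def, Real.fourierChar_apply, hphase]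
    exact mul_comm _ _
  · simp only [Set.indicator_of_notMem ht, smul_zero]

lemma exists_norm_bandIntegral_le_add_mul_exp_neg (hT : 0 ≤ T) {ε : ℝ} (hε : 0 < ε) :
    ∃ D, ∀ y, ‖bandIntegral T H y‖ ≤ ε + D * Real.exp (-y) := by
  obtain ⟨y₀, hy₀⟩ := eventually_atTop.mp
    ((tendsto_bandIntegral_atTop (H := H) hT).norm.eventually_le_const (norm_zero.trans_lt hε))
  set C := ∫ t in (-T)..T, ‖H t‖
  have hC : 0 ≤ C := (norm_nonneg _).trans (norm_bandIntegral_le hT 0)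
  refine ⟨C * Real.exp y₀, fun y ↦ ?_⟩
  rw [mul_assoc, ← Real.exp_add]
  rcases le_total y₀ y with hy | hy
  · exact (hy₀ y hy).trans (le_add_of_nonneg_right (by positivity))
  · have hexp : 1 ≤ Real.exp (y₀ + -y) := Real.one_le_exp (by linarith)
    calc ‖bandIntegral T H y‖ ≤ C := norm_bandIntegral_le hT y
      _ ≤ C * Real.exp (y₀ + -y) := le_mul_of_one_le_right hC hexp
      _ ≤ ε + C * Real.exp (y₀ + -y) := le_add_of_nonneg_left hε.le

end BandIntegral

section FejerKernel

lemma mul_sinc_self (x : ℝ) : x * Real.sinc x = Real.sin x := by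
  rcases eq_or_ne x 0 with rfl | hx
  · simp
  · rw [Real.sinc_of_ne_zero hx, mul_div_cancel₀ _ hx]

lemma sinc_sq_le (x : ℝ) : Real.sinc x ^ 2 ≤ 2 * (1 + x ^ 2)⁻¹ := by
  rw [← div_eq_mul_inv, le_div_iff₀ (by positivity)]
  have h₁ : Real.sinc x ^ 2 ≤ 1 := (sq_le_one_iff_abs_le_one _).mpr (Real.abs_sinc_le_one x)
  have h₂ : (x * Real.sinc x) ^ 2 ≤ 1 := mul_sinc_self x ▸ Real.sin_sq_le_one x
  linarith

lemma integrable_sinc_sq : Integrable fun x ↦ Real.sinc x ^ 2 := by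
  refine (integrable_inv_one_add_sq.const_mul 2).mono'
    (Real.continuous_sinc.pow 2).aestronglyMeasurable (.of_forall fun x ↦ ?_)
  rw [Real.norm_of_nonneg (sq_nonneg _)]
  exact sinc_sq_le x

lemma integral_sinc_sq_pos : 0 < ∫ x, Real.sinc x ^ 2 :=
  integral_pos_of_integrable_nonneg_nonzero (x := 0) (Real.continuous_sinc.pow 2)
    integrable_sinc_sq (fun _ ↦ sq_nonneg _) (by simp)

lemma integral_one_sub_mul_cos (y : ℝ) :
    ∫ t in (0 : ℝ)..1, 2 * (1 - t) * Real.cos (t * y) = Real.sinc (y / 2) ^ 2 := by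
  rcases eq_or_ne y 0 with rfl | hy
  · simp [intervalIntegral.integral_comp_sub_left fun x ↦ x]
  have hderiv (t : ℝ) : HasDerivAt
      (fun t ↦ 2 * ((1 - t) * Real.sin (t * y) / y - Real.cos (t * y) / y ^ 2))
      (2 * (1 - t) * Real.cos (t * y)) t := by
    have hty : HasDerivAt (fun t : ℝ ↦ t * y) y t := by simpa using (hasDerivAt_id t).mul_const y
    have h1t : HasDerivAt (fun t : ℝ ↦ 1 - t) (-1) t := by
      simpa using (hasDerivAt_id t).const_sub 1
    convert! (((h1t.mul hty.sin).div_const y).sub (hty.cos.div_const (y ^ 2))).const_mul 2 using 1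
    field
  rw [intervalIntegral.integral_eq_sub_of_hasDerivAt (fun t _ ↦ hderiv t)
    (Continuous.intervalIntegrable (by fun_prop) _ _),
    Real.sinc_of_ne_zero (by simpa using hy), div_pow, Real.sin_sq_eq_half_sub]
  simp only [sub_self, zero_mul, one_mul, zero_div, zero_sub, sub_zero, Real.sin_zero,
    Real.cos_zero, mul_zero]
  field_simp
  ring

lemma bandIntegral_tent (y : ℝ) :
    bandIntegral 1 (fun t ↦ ((1 - |t| : ℝ) : ℂ)) y = (Real.sinc (y / 2) ^ 2 : ℝ) := by
  rw [bandIntegral_ofReal_of_even (by fun_prop) (by simp), ← integral_one_sub_mul_cos]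
  congr 1
  refine intervalIntegral.integral_congr fun t ht ↦ ?_
  rw [Set.uIcc_of_le zero_le_one] at ht
  simp only [abs_of_nonneg ht.1]

end FejerKernel

/-- `k` is a probability density on the line whose Fourier transform is carried by `[-T, T]`, where
it is given by the continuous weight `g`. Such kernels smooth the coefficients of a Dirichlet series
using only a bounded piece of a vertical line. -/
structure IsBandlimitedKernel (T : ℝ) (g : ℝ → ℂ) (k : ℝ → ℝ) : Prop where
  pos : 0 < T
  continuous_weight : Continuous g
  nonneg : ∀ y, 0 ≤ k y
  integral_eq_one : ∫ y, k y = 1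
  bandIntegral_eq : ∀ y, bandIntegral T g y = k y

namespace IsBandlimitedKernel

variable {T : ℝ} {g : ℝ → ℂ} {k : ℝ → ℝ}

lemma continuous (K : IsBandlimitedKernel T g k) : Continuous k := by
  have hk : k = fun y ↦ (bandIntegral T g y).re := by
    ext y; rw [K.bandIntegral_eq, Complex.ofReal_re]
  exact hk ▸ Complex.continuous_re.comp (continuous_bandIntegral K.continuous_weight)

lemma integrable (K : IsBandlimitedKernel T g k) : Integrable k :=
  integrable_of_integral_eq_one K.integral_eq_one

lemma fejer : IsBandlimitedKernel 1 (fun t ↦ (2 * ∫ x, Real.sinc x ^ 2 : ℝ)⁻¹ * (1 - |t| : ℝ))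
    (fun y ↦ (2 * ∫ x, Real.sinc x ^ 2)⁻¹ * Real.sinc (y / 2) ^ 2) where
  pos := one_pos
  continuous_weight := by fun_prop
  nonneg y := by
    have := integral_sinc_sq_pos
    positivity
  integral_eq_one := by
    rw [integral_const_mul, Measure.integral_comp_div (fun x ↦ Real.sinc x ^ 2), smul_eq_mul,
      abs_two]
    exact inv_mul_cancel₀ (mul_pos two_pos integral_sinc_sq_pos).ne'
  bandIntegral_eq y := by
    rw [bandIntegral_const_mul, bandIntegral_tent]
    push_cast
    rfl

lemma dilate (K : IsBandlimitedKernel T g k) {R : ℝ} (hR : 0 < R) :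
    IsBandlimitedKernel (R * T) (fun t ↦ g (t / R)) (fun y ↦ R * k (R * y)) where
  pos := mul_pos hR K.pos
  continuous_weight := by
    have := K.continuous_weight
    fun_prop
  nonneg y := mul_nonneg hR.le (K.nonneg _)
  integral_eq_one := by
    rw [integral_const_mul, Measure.integral_comp_mul_left, K.integral_eq_one,
      abs_of_pos (inv_pos.mpr hR), smul_eq_mul, mul_one, mul_inv_cancel₀ hR.ne']
  bandIntegral_eq y := by
    rw [bandIntegral_comp_div hR.ne', K.bandIntegral_eq, Complex.ofReal_mul]

lemma tendsto_integral_dilate (K : IsBandlimitedKernel T g k) {η : ℝ} (hη : 0 < η) :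
    Tendsto (fun R : ℝ ↦ ∫ y in (-η)..η, R * k (R * y)) atTop (𝓝 1) := by
  have hmass : Tendsto (fun R : ℝ ↦ ∫ y in (-(R * η))..(R * η), k y) atTop (𝓝 1) := by
    have htop : Tendsto (fun R : ℝ ↦ R * η) atTop atTop := tendsto_id.atTop_mul_const hη
    exact K.integral_eq_one ▸ intervalIntegral_tendsto_integral K.integrable
      (tendsto_neg_atTop_atBot.comp htop) htop
  refine hmass.congr' ?_
  filter_upwards [eventually_gt_atTop 0] with R hR
  rw [intervalIntegral.integral_const_mul, intervalIntegral.integral_comp_mul_left _ hR.ne',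
    smul_eq_mul, mul_inv_cancel_left₀ hR.ne', mul_neg]

end IsBandlimitedKernel

lemma exists_isBandlimitedKernel {η δ : ℝ} (hη : 0 < η) (hδ : 0 < δ) :
    ∃ T g k, IsBandlimitedKernel T g k ∧ 1 - δ ≤ ∫ y in (-η)..η, k y := by
  have K := IsBandlimitedKernel.fejer
  obtain ⟨R, hmass, hR⟩ := (((K.tendsto_integral_dilate hη).eventually_const_le
    (sub_lt_self 1 hδ)).and (eventually_gt_atTop 0)).exists
  exact ⟨_, _, _, K.dilate hR, hmass⟩

section LSeries

variable {T : ℝ} {g : ℝ → ℂ}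

lemma bandIntegral_modulate (H : ℝ → ℂ) (l y : ℝ) :
    bandIntegral T (fun t ↦ Complex.exp (-(t * l * I)) * H t) y = bandIntegral T H (y - l) := by
  refine intervalIntegral.integral_congr fun t _ ↦ ?_
  have hexp : Complex.exp (t * (y - l : ℝ) * I) =
      Complex.exp (-(t * l * I)) * Complex.exp (t * y * I) := by
    rw [← Complex.exp_add]
    push_cast
    ring_nf
  rw [hexp]
  ring

lemma lseriesTerm_add_mul_I (f : ℕ → ℂ) (σ t : ℝ) (n : ℕ) :
    LSeries.term f (σ + t * I) n =
      LSeries.term f σ n * Complex.exp (-(t * Real.log n * I)) := by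
  rcases eq_or_ne n 0 with rfl | hn
  · simp
  have hn' : (n : ℂ) ≠ 0 := mod_cast hn
  rw [LSeries.term_of_ne_zero hn, LSeries.term_of_ne_zero hn, Complex.cpow_add _ _ hn',
    ← div_div, div_eq_mul_inv _ ((n : ℂ) ^ (t * I)), Complex.cpow_def_of_ne_zero hn' (t * I),
    ← Complex.exp_neg, Complex.natCast_log]
  ring_nf

lemma lseriesTerm_ofReal (f : ℕ → ℝ) {σ : ℝ} (hσ : σ ≠ 0) (n : ℕ) :
    LSeries.term (fun n ↦ (f n : ℂ)) σ n = (f n * (n : ℝ) ^ (-σ) : ℝ) := by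
  rcases eq_or_ne n 0 with rfl | hn
  · simp [Real.zero_rpow (neg_ne_zero.mpr hσ)]
  · rw [LSeries.term_of_ne_zero hn, Real.rpow_neg n.cast_nonneg]
    push_cast [Complex.ofReal_cpow n.cast_nonneg]
    rw [div_eq_mul_inv]

lemma hasSum_lseriesTerm_mul_bandIntegral (hg : Continuous g) {f : ℕ → ℂ} {σ : ℝ}
    (hf : LSeriesSummable f σ) (y : ℝ) :
    HasSum (fun n ↦ LSeries.term f σ n * bandIntegral T g (y - Real.log n))
      (bandIntegral T (fun t ↦ LSeries f (σ + t * I) * g t) y) := by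
  have hterm (n : ℕ) : LSeries.term f σ n * bandIntegral T g (y - Real.log n) =
      ∫ t in (-T)..T, LSeries.term f (σ + t * I) n * (g t * Complex.exp (t * y * I)) := by
    rw [← bandIntegral_modulate, ← bandIntegral_const_mul, bandIntegral]
    simp only [lseriesTerm_add_mul_I, mul_assoc]
  rw [funext hterm, bandIntegral]
  simp only [mul_assoc (LSeries f _)]
  refine intervalIntegral.hasSum_integral_of_dominated_convergence
    (fun n t ↦ ‖LSeries.term f σ n‖ * ‖g t‖) (fun n ↦ ?_) (fun n ↦ .of_forall fun t _ ↦ ?_)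
    (.of_forall fun t _ ↦ hf.norm.mul_right _) ?_ (.of_forall fun t _ ↦ ?_)
  · simp only [lseriesTerm_add_mul_I]
    exact Continuous.aestronglyMeasurable (by fun_prop)
  · simp [lseriesTerm_add_mul_I, Complex.norm_exp, -Complex.natCast_log]
  · simp only [tsum_mul_right]
    exact Continuous.intervalIntegrable (by fun_prop) _ _
  · have hf' : LSeriesSummable f (σ + t * I) :=
      (LSeriesSummable_iff_of_re_eq_re (by simp)).mpr hf
    exact hf'.hasSum.mul_right _

lemma bandIntegral_inv_mul (hT : 0 ≤ T) (hg : Continuous g) {c : ℝ} (hc : 0 < c) (y : ℝ) :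
    bandIntegral T (fun t ↦ (c + t * I)⁻¹ * g t) y =
      ∫ u in Set.Ioi (0 : ℝ), (Real.exp (-c * u) : ℂ) * bandIntegral T g (y - u) := by
  have hlaplace (t : ℝ) : (c + t * I)⁻¹ * g t * Complex.exp (t * y * I) =
      ∫ u in Set.Ioi (0 : ℝ), Complex.exp (-(c + t * I) * u) * (g t * Complex.exp (t * y * I)) := by
    rw [integral_mul_const, integral_exp_mul_complex_Ioi (by simpa using hc), Complex.ofReal_zero,
      mul_zero, Complex.exp_zero, neg_div_neg_eq, one_div, mul_assoc]
  have hint : Integrable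
      (Function.uncurry fun t u : ℝ ↦
        Complex.exp (-(c + t * I) * u) * (g t * Complex.exp (t * y * I)))
      ((volume.restrict (Set.Ioc (-T) T)).prod (volume.restrict (Set.Ioi 0))) := by
    have hgT : Integrable g (volume.restrict (Set.Ioc (-T) T)) :=
      (intervalIntegrable_iff_integrableOn_Ioc_of_le (by linarith)).mp (hg.intervalIntegrable _ _)
    have hexp : Integrable (fun u ↦ Real.exp (-c * u)) (volume.restrict (Set.Ioi 0)) :=
      exp_neg_integrableOn_Ioi 0 hc
    refine (hgT.norm.mul_prod hexp).mono
      (Continuous.aestronglyMeasurable (by unfold Function.uncurry; fun_prop))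
      (.of_forall fun p ↦ ?_)
    simp [Function.uncurry, Complex.norm_exp, mul_comm]
  rw [bandIntegral, intervalIntegral.integral_of_le (by linarith)]
  simp only [hlaplace]
  rw [integral_integral_swap hint]
  refine integral_congr_ae (.of_forall fun u ↦ ?_)
  simp only [← bandIntegral_modulate, ← bandIntegral_const_mul]
  rw [bandIntegral, intervalIntegral.integral_of_le (by linarith)]
  refine integral_congr_ae (.of_forall fun t ↦ ?_)
  have hexp : Complex.exp (-(c + t * I) * u) =
      Real.exp (-c * u) * Complex.exp (-(t * u * I)) := by
    rw [Complex.ofReal_exp, ← Complex.exp_add]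
    push_cast
    ring_nf
  simp only [hexp, mul_assoc]

end LSeries

namespace IsBandlimitedKernel

variable {T : ℝ} {g : ℝ → ℂ} {k : ℝ → ℝ} {f : ℕ → ℝ} {A : ℝ} {G : ℂ → ℂ}

lemma re_bandIntegral_inv_mul_le (K : IsBandlimitedKernel T g k) {c : ℝ} (hc : 0 < c) (y : ℝ) :
    (bandIntegral T (fun t ↦ (c + t * I)⁻¹ * g t) y).re ≤ 1 := by
  have hint : Integrable fun u ↦ k (y - u) := K.integrable.comp_sub_left y
  simp only [bandIntegral_inv_mul K.pos.le K.continuous_weight hc, K.bandIntegral_eq,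
    ← Complex.ofReal_mul, integral_complex_ofReal, Complex.ofReal_re]
  calc ∫ u in Set.Ioi (0 : ℝ), Real.exp (-c * u) * k (y - u)
      ≤ ∫ u in Set.Ioi (0 : ℝ), k (y - u) := by
        refine integral_mono_of_nonneg
          (.of_forall fun u ↦ mul_nonneg (Real.exp_pos _).le (K.nonneg _)) hint.integrableOn
          ((ae_restrict_iff' measurableSet_Ioi).mpr (.of_forall fun u (hu : 0 < u) ↦ ?_))
        refine mul_le_of_le_one_left (K.nonneg _) (Real.exp_le_one_iff.mpr ?_)
        nlinarith
    _ ≤ ∫ u, k (y - u) := setIntegral_le_integral hint (.of_forall fun u ↦ K.nonneg _)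
    _ = 1 := by rw [integral_sub_left_eq_self k volume y, K.integral_eq_one]

lemma sum_mul_rpow_le_of_one_lt (K : IsBandlimitedKernel T g k) (hf : ∀ n, 0 ≤ f n) (hA : 0 ≤ A)
    (hG : ContinuousOn G {s | 1 ≤ s.re})
    (hGf : Set.EqOn G (fun s ↦ LSeries (fun n ↦ (f n : ℂ)) s - A / (s - 1)) {s | 1 < s.re})
    {σ : ℝ} (hσ : 1 < σ) (hsum : LSeriesSummable (fun n ↦ (f n : ℂ)) σ) (s : Finset ℕ) (y : ℝ) :
    ∑ n ∈ s, f n * (n : ℝ) ^ (-σ) * k (y - Real.log n) ≤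
      A + (bandIntegral T (fun t ↦ G (σ + t * I) * g t) y).re := by
  have hg := K.continuous_weight
  have hpole (t : ℝ) : ((σ - 1 : ℝ) : ℂ) + t * I ≠ 0 := fun h ↦ by
    simpa [sub_ne_zero.mpr hσ.ne'] using congrArg Complex.re h
  have hsplit : bandIntegral T (fun t ↦ LSeries (fun n ↦ (f n : ℂ)) (σ + t * I) * g t) y =
      bandIntegral T (fun t ↦ G (σ + t * I) * g t) y +
        A * bandIntegral T (fun t ↦ ((σ - 1 : ℝ) + t * I)⁻¹ * g t) y := by
    have hregular : Continuous fun t : ℝ ↦ G (σ + t * I) * g t :=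
      (hG.comp_continuous (by fun_prop) (by simp [hσ.le])).mul hg
    have hsingular : Continuous fun t : ℝ ↦ (A : ℂ) * (((σ - 1 : ℝ) + t * I)⁻¹ * g t) :=
      continuous_const.mul (.mul (.inv₀ (by fun_prop) hpole) hg)
    rw [← bandIntegral_const_mul, ← bandIntegral_add hregular hsingular]
    congr 1 with t
    rw [hGf (by simpa using hσ)]
    push_cast
    ring_nf
  have hhas := Complex.hasSum_re (hasSum_lseriesTerm_mul_bandIntegral hg hsum (T := T) y)
  simp only [lseriesTerm_ofReal f (one_pos.trans hσ).ne', K.bandIntegral_eq, ← Complex.ofReal_mul,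
    Complex.ofReal_re] at hhas
  have hterm (n : ℕ) : 0 ≤ f n * (n : ℝ) ^ (-σ) * k (y - Real.log n) :=
    mul_nonneg (mul_nonneg (hf n) (by positivity)) (K.nonneg _)
  have hle := sum_le_hasSum s (fun n _ ↦ hterm n) hhas
  rw [hsplit, Complex.add_re, Complex.re_ofReal_mul] at hle
  have hA' := mul_le_of_le_one_right hA (K.re_bandIntegral_inv_mul_le (sub_pos.mpr hσ) y)
  linarith

lemma sum_mul_inv_le (K : IsBandlimitedKernel T g k) (hf : ∀ n, 0 ≤ f n) (hA : 0 ≤ A)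
    (hG : ContinuousOn G {s | 1 ≤ s.re})
    (hGf : Set.EqOn G (fun s ↦ LSeries (fun n ↦ (f n : ℂ)) s - A / (s - 1)) {s | 1 < s.re})
    (hsum : ∀ σ : ℝ, 1 < σ → LSeriesSummable (fun n ↦ (f n : ℂ)) σ) (s : Finset ℕ) (y : ℝ) :
    ∑ n ∈ s, f n * (n : ℝ)⁻¹ * k (y - Real.log n) ≤
      A + (bandIntegral T (fun t ↦ G (1 + t * I) * g t) y).re := by
  have hleft : ContinuousAt
      (fun σ : ℝ ↦ ∑ n ∈ s, f n * (n : ℝ) ^ (-σ) * k (y - Real.log n)) 1 := by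
    have hrpow (n : ℕ) : ContinuousAt (fun σ : ℝ ↦ (n : ℝ) ^ (-σ)) 1 :=
      (Real.continuousAt_const_rpow' (by norm_num)).comp continuousAt_neg
    fun_prop
  -- Truncating at `1` keeps `G` inside the half-plane where it is continuous.
  have hright : Continuous fun σ : ℝ ↦
      A + (bandIntegral T (fun t ↦ G ((max σ 1 : ℝ) + t * I) * g t) y).re := by
    have hGmax : Continuous fun p : ℝ × ℝ ↦ G ((max p.1 1 : ℝ) + p.2 * I) :=
      hG.comp_continuous (by fun_prop) (by simp)
    have hg := K.continuous_weight
    refine continuous_const.add (Complex.continuous_re.comp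
      (intervalIntegral.continuous_parametric_intervalIntegral_of_continuous' ?_ _ _))
    exact (hGmax.mul (hg.comp continuous_snd)).mul (by fun_prop)
  have hlim := le_of_tendsto_of_tendsto (hleft.tendsto.mono_left nhdsWithin_le_nhds)
    ((hright.tendsto 1).mono_left nhdsWithin_le_nhds) (b := 𝓝[>] (1 : ℝ))
    (eventually_mem_nhdsWithin.mono fun σ (hσ : 1 < σ) ↦ by
      simpa only [max_eq_left hσ.le] using
        K.sum_mul_rpow_le_of_one_lt hf hA hG hGf hσ (hsum σ hσ) s y)
  simpa [Real.rpow_neg_one] using hlim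

end IsBandlimitedKernel

section Tauberian

variable {f : ℕ → ℝ} {A : ℝ}

lemma exp_mul_le_integral_window {k : ℝ → ℝ} (hk : Continuous k) (hk₀ : ∀ y, 0 ≤ k y)
    {η m l u : ℝ} (hη : 0 ≤ η) (hm : m ≤ ∫ y in (-η)..η, k y) (hl : 0 ≤ l) (hlu : l ≤ u) :
    Real.exp (l - η) * m ≤ ∫ y in (-η)..(u + η), k (y - l) * Real.exp y := by
  have hcont : Continuous fun y ↦ k (y - l) * Real.exp y := by fun_prop
  calc Real.exp (l - η) * m
      ≤ Real.exp (l - η) * ∫ y in (-η)..η, k y := by gcongr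
    _ = ∫ y in (l - η)..(l + η), k (y - l) * Real.exp (l - η) := by
        rw [intervalIntegral.integral_mul_const, intervalIntegral.integral_comp_sub_right,
          sub_sub_cancel_left, add_sub_cancel_left, mul_comm]
    _ ≤ ∫ y in (l - η)..(l + η), k (y - l) * Real.exp y := by
        refine intervalIntegral.integral_mono_on (by linarith)
          (Continuous.intervalIntegrable (by fun_prop) _ _) (hcont.intervalIntegrable _ _)
          fun y hy ↦ mul_le_mul_of_nonneg_left (Real.exp_le_exp.mpr hy.1) (hk₀ _)
    _ ≤ ∫ y in (-η)..(u + η), k (y - l) * Real.exp y :=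
        intervalIntegral.integral_mono_interval (by linarith) (by linarith) (by linarith)
          (.of_forall fun y ↦ mul_nonneg (hk₀ _) (Real.exp_pos _).le)
          (hcont.intervalIntegrable _ _)

lemma integral_mul_exp_le {F : ℝ → ℝ} (hF : Continuous F) {η B D x : ℝ} (hη : 0 ≤ η)
    (hB : 0 ≤ B) (hx : 1 ≤ x) (hFle : ∀ y, F y ≤ B + D * Real.exp (-y)) :
    ∫ y in (-η)..(Real.log x + η), F y * Real.exp y ≤
      B * (x * Real.exp η) + D * (Real.log x + 2 * η) := by
  have hlog : 0 ≤ Real.log x := Real.log_nonneg hx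
  calc ∫ y in (-η)..(Real.log x + η), F y * Real.exp y
      ≤ ∫ y in (-η)..(Real.log x + η), (B * Real.exp y + D) := by
        refine intervalIntegral.integral_mono_on (by linarith)
          (Continuous.intervalIntegrable (by fun_prop) _ _)
          (Continuous.intervalIntegrable (by fun_prop) _ _) fun y _ ↦ ?_
        refine (mul_le_mul_of_nonneg_right (hFle y) (Real.exp_pos y).le).trans_eq ?_
        rw [add_mul, mul_assoc D, ← Real.exp_add, neg_add_cancel, Real.exp_zero, mul_one]
    _ = B * (x * Real.exp η - Real.exp (-η)) + D * (Real.log x + 2 * η) := by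
        rw [intervalIntegral.integral_add (Continuous.intervalIntegrable (by fun_prop) _ _)
            (by simp), intervalIntegral.integral_const_mul, integral_exp, Real.exp_add,
          Real.exp_log (one_pos.trans_le hx), intervalIntegral.integral_const, smul_eq_mul]
        ring
    _ ≤ B * (x * Real.exp η) + D * (Real.log x + 2 * η) := by
        gcongr
        exact sub_le_self _ (Real.exp_pos _).le

-- Integrating the hypothesis against `exp y` over `[-η, log x + η]` catches, for every `n ≤ x`,
-- the bulk of the kernel centred at `log n`.
lemma sum_mul_le_of_smoothed_sum_le {k : ℝ → ℝ} (hk : Continuous k) (hk₀ : ∀ y, 0 ≤ k y)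
    {η m B D x : ℝ} (hη : 0 ≤ η) (hm : m ≤ ∫ y in (-η)..η, k y) (hf : ∀ n, 0 ≤ f n) (hB : 0 ≤ B)
    (hx : 1 ≤ x)
    (hsmooth : ∀ y, ∑ n ∈ Finset.Ioc 0 ⌊x⌋₊, f n * (n : ℝ)⁻¹ * k (y - Real.log n) ≤
      B + D * Real.exp (-y)) :
    (∑ n ∈ Finset.Ioc 0 ⌊x⌋₊, f n) * (Real.exp (-η) * m) ≤
      B * (x * Real.exp η) + D * (Real.log x + 2 * η) := by
  have hx₀ : 0 < x := one_pos.trans_le hx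
  have hterm : ∀ n ∈ Finset.Ioc 0 ⌊x⌋₊, f n * (Real.exp (-η) * m) ≤
      f n * (n : ℝ)⁻¹ * ∫ y in (-η)..(Real.log x + η), k (y - Real.log n) * Real.exp y := by
    intro n hn
    obtain ⟨hn, hnx⟩ := Finset.mem_Ioc.mp hn
    have hn₀ : (0 : ℝ) < n := mod_cast hn
    have hwin := exp_mul_le_integral_window hk hk₀ hη hm (Real.log_natCast_nonneg n)
      (Real.log_le_log hn₀ ((Nat.le_floor_iff hx₀.le).mp hnx))
    rw [sub_eq_add_neg, Real.exp_add, Real.exp_log hn₀, mul_assoc] at hwin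
    rw [mul_assoc (f n)]
    exact mul_le_mul_of_nonneg_left ((le_inv_mul_iff₀ hn₀).mpr hwin) (hf n)
  calc (∑ n ∈ Finset.Ioc 0 ⌊x⌋₊, f n) * (Real.exp (-η) * m)
      ≤ ∑ n ∈ Finset.Ioc 0 ⌊x⌋₊, f n * (n : ℝ)⁻¹ *
          ∫ y in (-η)..(Real.log x + η), k (y - Real.log n) * Real.exp y := by
        rw [Finset.sum_mul]
        exact Finset.sum_le_sum hterm
    _ = ∫ y in (-η)..(Real.log x + η),
          (∑ n ∈ Finset.Ioc 0 ⌊x⌋₊, f n * (n : ℝ)⁻¹ * k (y - Real.log n)) * Real.exp y := by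
        simp only [Finset.sum_mul, ← intervalIntegral.integral_const_mul, mul_assoc]
        exact (intervalIntegral.integral_finsetSum fun n _ ↦
          Continuous.intervalIntegrable (by fun_prop) _ _).symm
    _ ≤ B * (x * Real.exp η) + D * (Real.log x + 2 * η) :=
        integral_mul_exp_le (by fun_prop) hη hB hx hsmooth

lemma exists_mem_Ioo_lt_of_continuousAt {F : ℝ → ℝ} {c : ℝ} (hF : ContinuousAt F 0)
    (h : F 0 < c) : ∃ e ∈ Set.Ioo (0 : ℝ) 1, F e < c := by
  have hlt := (hF.eventually_lt_const h).filter_mono (nhdsWithin_le_nhds (s := Set.Ioi 0))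
  obtain ⟨e, hFe, he⟩ := (hlt.and (Ioo_mem_nhdsGT one_pos)).exists
  exact ⟨e, he, hFe⟩

lemma exists_sum_mul_le_add_log {G : ℂ → ℂ} (hf : ∀ n, 0 ≤ f n)
    (hsum : ∀ σ : ℝ, 1 < σ → LSeriesSummable (fun n ↦ (f n : ℂ)) σ) (hA : 0 ≤ A)
    (hG : ContinuousOn G {s | 1 ≤ s.re})
    (hGf : Set.EqOn G (fun s ↦ LSeries (fun n ↦ (f n : ℂ)) s - A / (s - 1)) {s | 1 < s.re})
    {e : ℝ} (he : 0 < e) :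
    ∃ D, ∀ x, 1 ≤ x → (∑ n ∈ Finset.Ioc 0 ⌊x⌋₊, f n) * (Real.exp (-e) * (1 - e)) ≤
      (A + e) * (x * Real.exp e) + D * (Real.log x + 2 * e) := by
  obtain ⟨T, g, k, K, hmass⟩ := exists_isBandlimitedKernel he he
  obtain ⟨D, hD⟩ := exists_norm_bandIntegral_le_add_mul_exp_neg
    (H := fun t ↦ G (1 + t * I) * g t) K.pos.le he
  refine ⟨D, fun x hx ↦ sum_mul_le_of_smoothed_sum_le K.continuous K.nonneg he.le hmass hf
    (by positivity) hx fun y ↦ ?_⟩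
  have hle := K.sum_mul_inv_le hf hA hG hGf hsum (Finset.Ioc 0 ⌊x⌋₊) y
  have hre := (Complex.re_le_norm _).trans (hD y)
  linarith

lemma eventually_sum_le_of_continuousOn_LSeries_sub_pole {G : ℂ → ℂ} (hf : ∀ n, 0 ≤ f n)
    (hsum : ∀ σ : ℝ, 1 < σ → LSeriesSummable (fun n ↦ (f n : ℂ)) σ) (hA : 0 ≤ A)
    (hG : ContinuousOn G {s | 1 ≤ s.re})
    (hGf : Set.EqOn G (fun s ↦ LSeries (fun n ↦ (f n : ℂ)) s - A / (s - 1)) {s | 1 < s.re})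
    {ε : ℝ} (hε : 0 < ε) :
    ∀ᶠ x : ℝ in atTop, ∑ n ∈ Finset.Ioc 0 ⌊x⌋₊, f n ≤ (A + ε) * x := by
  obtain ⟨e, ⟨he, he₁⟩, heA⟩ : ∃ e ∈ Set.Ioo (0 : ℝ) 1,
      ((A + e) * Real.exp e + e) / (Real.exp (-e) * (1 - e)) < A + ε :=
    exists_mem_Ioo_lt_of_continuousAt (by fun_prop (disch := norm_num)) (by simpa using hε)
  have hpos : 0 < Real.exp (-e) * (1 - e) := mul_pos (Real.exp_pos _) (sub_pos.mpr he₁)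
  rw [div_lt_iff₀ hpos] at heA
  obtain ⟨D, hD⟩ := exists_sum_mul_le_add_log hf hsum hA hG hGf he
  have herr : (fun x : ℝ ↦ D * (Real.log x + 2 * e)) =o[atTop] fun x ↦ x :=
    (Real.isLittleO_log_id_atTop.add (isLittleO_const_id_atTop _)).const_mul_left D
  filter_upwards [herr.bound he, eventually_ge_atTop 1] with x hx hx₁
  have hx₀ : 0 < x := one_pos.trans_le hx₁
  rw [Real.norm_of_nonneg hx₀.le] at hx
  refine le_of_mul_le_mul_right ?_ hpos
  calc (∑ n ∈ Finset.Ioc 0 ⌊x⌋₊, f n) * (Real.exp (-e) * (1 - e))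
      ≤ (A + e) * (x * Real.exp e) + D * (Real.log x + 2 * e) := hD x hx₁
    _ ≤ (A + e) * (x * Real.exp e) + e * x := by linarith [(Real.le_norm_self _).trans hx]
    _ = ((A + e) * Real.exp e + e) * x := by ring
    _ ≤ (A + ε) * (Real.exp (-e) * (1 - e)) * x := by gcongr
    _ = (A + ε) * x * (Real.exp (-e) * (1 - e)) := by ring

end Tauberian

section PrimesInProgressions

open ArithmeticFunction.vonMangoldt

lemma card_le_add_sum_log_div (s : Finset ℕ) {z : ℝ} (hz : 1 < z) :
    (s.card : ℝ) ≤ z + 1 + (∑ n ∈ s, Real.log n) / Real.log z := by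
  have hlogz : 0 < Real.log z := Real.log_pos hz
  have hterm (n : ℕ) : (1 : ℝ) ≤ (if n ≤ ⌊z⌋₊ then 1 else 0) + Real.log n / Real.log z := by
    split_ifs with hn
    · exact le_add_of_nonneg_right (div_nonneg (Real.log_natCast_nonneg n) hlogz.le)
    · rw [zero_add, one_le_div hlogz]
      exact Real.log_le_log (one_pos.trans hz) (Nat.lt_of_floor_lt (not_le.mp hn)).le
  have hsmall : (s.filter (· ≤ ⌊z⌋₊)).card ≤ ⌊z⌋₊ + 1 := by
    refine (Finset.card_le_card fun n hn ↦ ?_).trans_eq (Finset.card_range (⌊z⌋₊ + 1))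
    exact Finset.mem_range_succ_iff.mpr (Finset.mem_filter.mp hn).2
  calc (s.card : ℝ) = ∑ _ ∈ s, (1 : ℝ) := by simp
    _ ≤ ∑ n ∈ s, ((if n ≤ ⌊z⌋₊ then 1 else 0) + Real.log n / Real.log z) :=
        Finset.sum_le_sum fun n _ ↦ hterm n
    _ = (s.filter (· ≤ ⌊z⌋₊)).card + (∑ n ∈ s, Real.log n) / Real.log z := by
        rw [Finset.sum_add_distrib, Finset.sum_boole, Finset.sum_div]
    _ ≤ z + 1 + (∑ n ∈ s, Real.log n) / Real.log z := by
        gcongr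
        exact (Nat.cast_le.mpr hsmall).trans
          (by simpa using Nat.floor_le (one_pos.trans hz).le)

lemma isLittleO_rpow_div_log {c : ℝ} (hc : c < 1) :
    (fun x : ℝ ↦ x ^ c) =o[atTop] fun x ↦ x / Real.log x := by
  refine ((isLittleO_log_rpow_atTop (sub_pos.mpr hc)).mul_isBigO
    (isBigO_refl (fun x : ℝ ↦ x ^ c / Real.log x) atTop)).congr' ?_ ?_
  · filter_upwards [eventually_gt_atTop 1] with x hx
    rw [mul_div_cancel₀ _ (Real.log_pos hx).ne']
  · filter_upwards [eventually_gt_atTop 0] with x hx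
    rw [← mul_div_assoc, ← Real.rpow_add hx, sub_add_cancel, Real.rpow_one]

lemma isLittleO_const_div_log (c : ℝ) : (fun _ : ℝ ↦ c) =o[atTop] fun x ↦ x / Real.log x := by
  simpa using (isLittleO_rpow_div_log zero_lt_one).const_mul_left c

lemma eventually_card_filter_le_of_sum_log_le {P : ℕ → Prop} [DecidablePred P] {A : ℝ}
    (hP : ∀ δ > 0, ∀ᶠ N : ℕ in atTop,
      ∑ n ∈ Finset.range N with P n, Real.log n ≤ (A + δ) * N) {ε : ℝ} (hε : 0 < ε) :
    ∀ᶠ N : ℕ in atTop,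
      (((Finset.range N).filter P).card : ℝ) ≤ (A + ε) * (N / Real.log N) := by
  obtain ⟨d, ⟨hd, hd₁⟩, hdA⟩ : ∃ d ∈ Set.Ioo (0 : ℝ) 1, d + (A + d) / (1 - d) < A + ε :=
    exists_mem_Ioo_lt_of_continuousAt (by fun_prop (disch := norm_num)) (by simpa using hε)
  have hsmall := ((isLittleO_rpow_div_log (sub_lt_self 1 hd)).add
    (isLittleO_const_div_log 1)).bound hd
  filter_upwards [hP d hd, tendsto_natCast_atTop_atTop.eventually hsmall,
    eventually_gt_atTop 1] with N hN hNsmall hN₁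
  have hN₁' : (1 : ℝ) < N := mod_cast hN₁
  have hN₀ : (0 : ℝ) < N := one_pos.trans hN₁'
  have hlog : 0 < Real.log N := Real.log_pos hN₁'
  rw [Real.norm_of_nonneg (by positivity), Real.norm_of_nonneg (by positivity)] at hNsmall
  have hd₁' : 0 < 1 - d := sub_pos.mpr hd₁
  calc (((Finset.range N).filter P).card : ℝ)
      ≤ (N : ℝ) ^ (1 - d) + 1 +
          (∑ n ∈ Finset.range N with P n, Real.log n) / Real.log ((N : ℝ) ^ (1 - d)) :=
        card_le_add_sum_log_div _ (Real.one_lt_rpow hN₁' hd₁')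
    _ ≤ d * (N / Real.log N) + (A + d) * N / ((1 - d) * Real.log N) := by
        rw [Real.log_rpow hN₀]
        gcongr
    _ = (d + (A + d) / (1 - d)) * (N / Real.log N) := by field
    _ ≤ (A + ε) * (N / Real.log N) := by gcongr

lemma eventually_sum_residueClass_le {q : ℕ} [NeZero q] {r : ZMod q} (hr : IsUnit r) {ε : ℝ}
    (hε : 0 < ε) :
    ∀ᶠ x : ℝ in atTop,
      ∑ n ∈ Finset.Ioc 0 ⌊x⌋₊, residueClass r n ≤ ((q.totient : ℝ)⁻¹ + ε) * x := by
  refine eventually_sum_le_of_continuousOn_LSeries_sub_pole (residueClass_nonneg r)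
    (fun σ hσ ↦ ?_) (by positivity) (continuousOn_LFunctionResidueClassAux r) ?_ hε
  · refine LSeriesSummable_of_abscissaOfAbsConv_lt_re
      ((abscissaOfAbsConv_residueClass_le_one r).trans_lt ?_)
    rw [Complex.ofReal_re]
    exact_mod_cast hσ
  · push_cast
    exact eqOn_LFunctionResidueClassAux hr

/-- The primes below `X` in the residue class `r`, counted by `π(X; q, r)` up to the exclusion of
`X` itself. -/
def primesInResidueClass {q : ℕ} (r : ZMod q) (X : ℕ) : Finset ℕ :=
  {p ∈ Finset.range X | p.Prime ∧ (p : ZMod q) = r}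

lemma eventually_card_primesInResidueClass_le {q : ℕ} [NeZero q] {r : ZMod q} (hr : IsUnit r)
    {ε : ℝ} (hε : 0 < ε) :
    ∀ᶠ X : ℕ in atTop,
      ((primesInResidueClass r X).card : ℝ) ≤ ((q.totient : ℝ)⁻¹ + ε) * (X / Real.log X) := by
  refine eventually_card_filter_le_of_sum_log_le (fun δ hδ ↦ ?_) hε
  filter_upwards [tendsto_natCast_atTop_atTop.eventually (eventually_sum_residueClass_le hr hδ)]
    with X hX
  rw [Nat.floor_natCast] at hX
  have hmem : ∀ p ∈ primesInResidueClass r X,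
      p ∈ Finset.Ioc 0 X ∧ Real.log p = residueClass r p := by
    intro p hp
    obtain ⟨hpX, hp, hpr⟩ := Finset.mem_filter.mp hp
    refine ⟨Finset.mem_Ioc.mpr ⟨hp.pos, (Finset.mem_range.mp hpX).le⟩, ?_⟩
    rw [residueClass, Set.indicator_of_mem (by exact hpr),
      ArithmeticFunction.vonMangoldt_apply_prime hp]
  calc ∑ p ∈ primesInResidueClass r X, Real.log p
      = ∑ p ∈ primesInResidueClass r X, residueClass r p :=
        Finset.sum_congr rfl fun p hp ↦ (hmem p hp).2
    _ ≤ ∑ p ∈ Finset.Ioc 0 X, residueClass r p :=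
        Finset.sum_le_sum_of_subset_of_nonneg (fun p hp ↦ (hmem p hp).1) fun p _ _ ↦
          residueClass_nonneg r p
    _ ≤ ((q.totient : ℝ)⁻¹ + δ) * X := hX

end PrimesInProgressions

section NumericalSemigroup

lemma two_mul_sum_coprime {a : ℕ} (ha : 2 ≤ a) :
    2 * ∑ v ∈ Finset.range a with a.Coprime v, v = a * a.totient := by
  have hpos {v : ℕ} (hv : a.Coprime v) : v ≠ 0 := by
    rintro rfl
    have := a.coprime_zero_right.mp hv
    omega
  have hreflect : ∑ v ∈ Finset.range a with a.Coprime v, (a - v) =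
      ∑ v ∈ Finset.range a with a.Coprime v, v := by
    refine Finset.sum_nbij' (a - ·) (a - ·) ?_ ?_ ?_ ?_ fun _ _ ↦ rfl
    all_goals
      intro v hv
      obtain ⟨hva, hv⟩ := Finset.mem_filter.mp hv
      have := hpos hv
      have hva := Finset.mem_range.mp hva
    iterate 2
      exact Finset.mem_filter.mpr
        ⟨Finset.mem_range.mpr (by omega), (Nat.coprime_self_sub_right hva.le).mpr hv⟩
    iterate 2 exact Nat.sub_sub_self hva.le
  calc 2 * ∑ v ∈ Finset.range a with a.Coprime v, v
      = ∑ v ∈ Finset.range a with a.Coprime v, (a - v + v) := by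
        rw [Finset.sum_add_distrib, hreflect, two_mul]
    _ = ∑ _v ∈ Finset.range a with a.Coprime _v, a := Finset.sum_congr rfl fun v hv ↦
        Nat.sub_add_cancel (Finset.mem_range.mp (Finset.mem_filter.mp hv).1).le
    _ = a * a.totient := by rw [Finset.sum_const, smul_eq_mul, mul_comm, Nat.totient]

lemma exists_lt_natCast_mul_eq {a b : ℕ} [NeZero a] (hab : a.Coprime b) (n : ℕ) :
    ∃ v < a, ((b * v : ℕ) : ZMod a) = n := by
  refine ⟨((b : ZMod a)⁻¹ * n).val, ZMod.val_lt _, ?_⟩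
  have hb : IsUnit (b : ZMod a) := (ZMod.isUnit_iff_coprime b a).mpr hab.symm
  rw [Nat.cast_mul, ZMod.natCast_zmod_val, ← mul_assoc, ZMod.mul_inv_of_unit _ hb, one_mul]

lemma exists_eq_mul_add_of_natCast_eq {a m n : ℕ} (h : (m : ZMod a) = n) (hmn : m ≤ n) :
    ∃ u, n = a * u + m := by
  obtain ⟨u, hu⟩ := (Nat.modEq_iff_dvd' hmn).mp ((ZMod.natCast_eq_natCast_iff _ _ _).mp h)
  exact ⟨u, by omega⟩

lemma piStar_le {a b : ℕ} [NeZero a] (hab : a.Coprime b) :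
    piStar a b ≤ a.primeFactors.card +
      ∑ v ∈ Finset.range a with a.Coprime v,
        (primesInResidueClass ((b * v : ℕ) : ZMod a) (b * v)).card := by
  have hcover : {p : ℕ | p.Prime ∧ ¬ ∃ u v : ℕ, p = a * u + b * v} ⊆
      ↑(a.primeFactors ∪ ({v ∈ Finset.range a | a.Coprime v} : Finset ℕ).biUnion
        fun v ↦ primesInResidueClass ((b * v : ℕ) : ZMod a) (b * v)) := by
    rintro p ⟨hp, hrep⟩
    rw [Finset.mem_coe, Finset.mem_union]
    refine or_iff_not_imp_left.mpr fun hpa ↦ Finset.mem_biUnion.mpr ?_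
    obtain ⟨v, hva, hv⟩ := exists_lt_natCast_mul_eq hab p
    have hpu : IsUnit (p : ZMod a) := (ZMod.isUnit_iff_coprime p a).mpr
      (hp.coprime_iff_not_dvd.mpr fun h ↦ hpa (hp.mem_primeFactors h (NeZero.ne a)))
    have hcop : a.Coprime v :=
      ((ZMod.isUnit_iff_coprime _ _).mp (hv ▸ hpu)).coprime_mul_left.symm
    have hlt : p < b * v := by
      by_contra! hle
      obtain ⟨u, hu⟩ := exists_eq_mul_add_of_natCast_eq hv hle
      exact hrep ⟨u, v, hu⟩
    exact ⟨v, Finset.mem_filter.mpr ⟨Finset.mem_range.mpr hva, hcop⟩,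
      Finset.mem_filter.mpr ⟨Finset.mem_range.mpr hlt, hp, hv.symm⟩⟩
  calc piStar a b ≤ _ := Set.ncard_le_ncard hcover (Finset.finite_toSet _)
    _ ≤ _ := (Set.ncard_coe_finset _).trans_le (Finset.card_union_le _ _)
    _ ≤ _ := Nat.add_le_add_left Finset.card_biUnion_le _

lemma eventually_forall_card_primesInResidueClass_mul_le (q : ℕ) [NeZero q] {ε : ℝ} (hε : 0 < ε) :
    ∀ᶠ b : ℕ in atTop, ∀ v ≠ 0, ∀ r : ZMod q, IsUnit r →
      ((primesInResidueClass r (b * v)).card : ℝ) ≤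
        ((q.totient : ℝ)⁻¹ + ε) * (b / Real.log b) * v := by
  have hall : ∀ᶠ X : ℕ in atTop, ∀ r : ZMod q, IsUnit r →
      ((primesInResidueClass r X).card : ℝ) ≤ ((q.totient : ℝ)⁻¹ + ε) * (X / Real.log X) :=
    eventually_all.mpr fun r ↦ by
      by_cases hr : IsUnit r
      · simpa [hr] using eventually_card_primesInResidueClass_le hr hε
      · simp [hr]
  obtain ⟨B, hB⟩ := eventually_atTop.mp hall
  filter_upwards [eventually_ge_atTop B, eventually_gt_atTop 1] with b hbB hb v hv r hr
  have hbv : b ≤ b * v := Nat.le_mul_of_pos_right b (Nat.pos_of_ne_zero hv)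
  have hlog : 0 < Real.log b := Real.log_pos (mod_cast hb)
  calc ((primesInResidueClass r (b * v)).card : ℝ)
      ≤ ((q.totient : ℝ)⁻¹ + ε) * ((b * v : ℕ) / Real.log (b * v : ℕ)) := hB _ (hbB.trans hbv) r hr
    _ ≤ ((q.totient : ℝ)⁻¹ + ε) * ((b * v : ℕ) / Real.log b) := by gcongr
    _ = ((q.totient : ℝ)⁻¹ + ε) * (b / Real.log b) * v := by push_cast; ring

lemma eventually_piStar_le {a : ℕ} (ha : 2 ≤ a) {ε : ℝ} (hε : 0 < ε) :
    ∀ᶠ b : ℕ in atTop, a.Coprime b → (piStar a b : ℝ) ≤ (a / 2 + ε) * (b / Real.log b) := by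
  have : NeZero a := ⟨by omega⟩
  have hφ : (0 : ℝ) < a.totient := mod_cast Nat.totient_pos.mpr (by omega)
  have hsum : ∑ v ∈ Finset.range a with a.Coprime v, (v : ℝ) = a * a.totient / 2 := by
    have h := congrArg (Nat.cast : ℕ → ℝ) (two_mul_sum_coprime ha)
    push_cast at h
    linarith
  have hpf := ((isLittleO_const_div_log a.primeFactors.card).comp_tendsto
    tendsto_natCast_atTop_atTop).bound (half_pos hε)
  filter_upwards [hpf, eventually_forall_card_primesInResidueClass_mul_le a
    (div_pos hε (mul_pos (Nat.cast_pos.mpr (NeZero.pos a)) hφ))] with b hbpf hb hab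
  have hclass : ∀ v ∈ ({v ∈ Finset.range a | a.Coprime v} : Finset ℕ),
      ((primesInResidueClass ((b * v : ℕ) : ZMod a) (b * v)).card : ℝ) ≤
        ((a.totient : ℝ)⁻¹ + ε / (a * a.totient)) * (b / Real.log b) * v := by
    intro v hv
    have hcop : a.Coprime v := (Finset.mem_filter.mp hv).2
    refine hb v ?_ _ ((ZMod.isUnit_iff_coprime _ _).mpr (hab.mul_right hcop).symm)
    rintro rfl
    have := a.coprime_zero_right.mp hcop
    omega
  simp only [Function.comp_apply, RCLike.norm_natCast] at hbpf
  rw [Real.norm_of_nonneg (div_nonneg b.cast_nonneg (Real.log_natCast_nonneg b))] at hbpf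
  calc (piStar a b : ℝ)
      ≤ a.primeFactors.card + ∑ v ∈ Finset.range a with a.Coprime v,
          ((primesInResidueClass ((b * v : ℕ) : ZMod a) (b * v)).card : ℝ) :=
        mod_cast piStar_le hab
    _ ≤ ε / 2 * (b / Real.log b) + ∑ v ∈ Finset.range a with a.Coprime v,
          ((a.totient : ℝ)⁻¹ + ε / (a * a.totient)) * (b / Real.log b) * v :=
        add_le_add hbpf (Finset.sum_le_sum hclass)
    _ = (a / 2 + ε) * (b / Real.log b) := by
        rw [← Finset.mul_sum, hsum]
        field

end NumericalSemigroup

section Frobenius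

variable {a : ℕ}

lemma natCast_S {b : ℕ} (ha : 2 ≤ a) (hb : 2 ≤ b) : (S a b : ℝ) = ((a : ℝ) - 1) * b - a := by
  have hle : a + b ≤ a * b := Nat.add_le_mul ha hb
  rw [S, Nat.sub_sub, Nat.cast_sub hle]
  push_cast
  ring

lemma isEquivalent_S (ha : 2 ≤ a) :
    (fun b : ℕ ↦ (S a b : ℝ)) ~[atTop] fun b ↦ ((a : ℝ) - 1) * b := by
  have ha' : (a : ℝ) - 1 ≠ 0 := sub_ne_zero.mpr (by exact_mod_cast (show a ≠ 1 by omega))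
  have hconst : (fun _ : ℕ ↦ (a : ℝ)) =o[atTop] fun b : ℕ ↦ ((a : ℝ) - 1) * b :=
    ((isLittleO_const_id_atTop (a : ℝ)).comp_tendsto
      tendsto_natCast_atTop_atTop).const_mul_right ha'
  refine (IsEquivalent.refl.sub_isLittleO hconst).congr_left ?_
  filter_upwards [eventually_ge_atTop 2] with b hb using (natCast_S ha hb).symm

lemma isEquivalent_log_S (ha : 2 ≤ a) :
    (fun b : ℕ ↦ Real.log (S a b)) ~[atTop] fun b ↦ Real.log b := by
  have ha' : (0 : ℝ) < (a : ℝ) - 1 := sub_pos.mpr (by exact_mod_cast ha)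
  have hlog : (fun b : ℕ ↦ Real.log (((a : ℝ) - 1) * b)) ~[atTop] fun b ↦ Real.log b := by
    have hconst : (fun _ : ℕ ↦ Real.log ((a : ℝ) - 1)) =o[atTop] fun b : ℕ ↦ Real.log b :=
      (Real.isLittleO_const_log_atTop).comp_tendsto tendsto_natCast_atTop_atTop
    refine (hconst.add_isEquivalent IsEquivalent.refl).congr_left ?_
    filter_upwards [eventually_gt_atTop 0] with b hb
    exact (Real.log_mul ha'.ne' (by positivity)).symm
  exact ((isEquivalent_S ha).log (tendsto_natCast_atTop_atTop.const_mul_atTop ha')).trans hlog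

lemma tendsto_S_div_log_div (ha : 2 ≤ a) :
    Tendsto (fun b : ℕ ↦ S a b / Real.log (S a b) / (b / Real.log b)) atTop
      (𝓝 ((a : ℝ) - 1)) := by
  have hdiv := ((isEquivalent_S ha).div (isEquivalent_log_S ha)).div
    (IsEquivalent.refl (u := fun b : ℕ ↦ (b : ℝ) / Real.log b))
  refine (hdiv.trans_eventuallyEq ?_).tendsto_const
  filter_upwards [eventually_gt_atTop 1] with b hb
  have hlog : 0 < Real.log b := Real.log_pos (mod_cast hb)
  simp only [Pi.div_apply, Function.const_apply]
  field

end Frobenius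

theorem factor_is_best_possible_general {a : ℕ} (ha : 2 ≤ a) {ε : ℝ} (hε : 0 < ε) :
    ∀ᶠ b : ℕ in atTop, a.Coprime b →
      (piStar a b : ℝ) ≤
        (1 / 2 + 1 / (2 * ((a : ℝ) - 1)) + ε) * (S a b : ℝ) / Real.log (S a b) := by
  have ha' : (0 : ℝ) < (a : ℝ) - 1 := sub_pos.mpr (by exact_mod_cast ha)
  set c : ℝ := 1 / 2 + 1 / (2 * ((a : ℝ) - 1)) + ε with hc
  have hca : c * ((a : ℝ) - 1) = a / 2 + ε * ((a : ℝ) - 1) := by rw [hc]; field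
  have hδ : 0 < ε * ((a : ℝ) - 1) / 2 := by positivity
  filter_upwards [eventually_piStar_le ha hδ, eventually_gt_atTop 1,
    ((tendsto_S_div_log_div ha).const_mul c).eventually_const_le
      (show a / 2 + ε * ((a : ℝ) - 1) / 2 < c * ((a : ℝ) - 1) by linarith)] with b hb hb₁ hS hab
  have hlog : 0 < Real.log b := Real.log_pos (mod_cast hb₁)
  rw [← mul_div_assoc, le_div_iff₀ (by positivity)] at hS
  rw [mul_div_assoc]
  exact (hb hab).trans hS

/-- The factor `1/2 + 1/(2(a-1))` in the lower bound for `piStar a b` is best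
possible: for every `ε > 0`, for all sufficiently large `b` coprime to `a`,
`piStar a b ≤ (1/2 + 1/(2(a-1)) + ε) · S(a,b)/log S(a,b)`. -/
theorem factor_is_best_possible :
    ∀ a : ℕ, 3 ≤ a → ∀ ε : ℝ, 0 < ε → ∃ B : ℕ, ∀ b : ℕ, B ≤ b →
      Nat.Coprime a b →
      (piStar a b : ℝ) ≤
        ((1 : ℝ) / 2 + 1 / (2 * ((a : ℝ) - 1)) + ε) * (S a b : ℝ) /
          Real.log (S a b) :=
  fun _ ha _ hε ↦ eventually_atTop.mp (factor_is_best_possible_general (Nat.le_of_succ_le ha) hε)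
end
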